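/- arXiv:math/0703415 — 4 statements merged into one kernel-verified Lean document; each statement's English description precedes it below -/
import Mathlib

section
/- Let d ≥ 1 and let f : (0,∞) → ℝ be measurable such that r²f(r) is nonnegative and bounded. Then lim_{R→∞} (1/R) ∫₀^R r² f(r) dr = lim_{h→0+} (1/h) · π^{−3/2} (Γ((d+1)/2)/Γ(d/2)) ∫₀^∞ (1 − Γ(d/2) · J_{d/2−1}(2πhr)/(πhr)^{d/2−1}) f(r) dr, in the sense that if either of the two limits exists (finitely), then both exist and they are equal. -/
open MeasureTheory Metric Set Real Complex Filter
open scoped FourierTransform RealInnerProductSpace Pointwise ENNReal Topology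

noncomputable section

/-- The Euclidean space `ℝ^d`. -/
abbrev E (d : ℕ) := EuclideanSpace ℝ (Fin d)

/-- View a plain vector `Fin d → ℝ` as a point of Euclidean space. -/
def toE {d : ℕ} (v : Fin d → ℝ) : E d := (EuclideanSpace.equiv (Fin d) ℝ).symm v

/-- The point lattice `T = A ℤ^d`. -/
def latticeSet (d : ℕ) (A : Matrix (Fin d) (Fin d) ℝ) : Set (E d) :=
  {p | ∃ n : Fin d → ℤ, p = toE (A.mulVec fun i => (n i : ℝ))}

/-- The fundamental region `F_T = A [0,1)^d`. -/
def fundRegion (d : ℕ) (A : Matrix (Fin d) (Fin d) ℝ) : Set (E d) :=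
  (fun y => toE (A.mulVec y)) '' (Set.pi Set.univ fun _ : Fin d => Set.Ico (0 : ℝ) 1)

/-- Number of lattice points in the translate `D + x`. -/
def latticeCount (d : ℕ) (A : Matrix (Fin d) (Fin d) ℝ) (D : Set (E d)) (x : E d) : ℕ :=
  (((fun y => y + x) '' D) ∩ latticeSet d A).ncard

/-- The dual lattice `T* = {ξ | ξ·p ∈ ℤ for all p ∈ T}`. -/
def dualLattice (d : ℕ) (A : Matrix (Fin d) (Fin d) ℝ) : Set (E d) :=
  {ξ | ∀ p ∈ latticeSet d A, ∃ k : ℤ, ⟪ξ, p⟫ = (k : ℝ)}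

/-- The (complex-valued) indicator function of a set. -/
def indC {d : ℕ} (D : Set (E d)) : E d → ℂ := D.indicator 1

/-- The covariogram `γ_D(x) = ∫ I_D(y) I_D(y - x) dy`. -/
def covariogram {d : ℕ} (D : Set (E d)) (x : E d) : ℝ :=
  ∫ y, (D.indicator (1 : E d → ℝ) y) * (D.indicator (1 : E d → ℝ) (y - x))

/-- The normalized (probability) surface measure on the unit sphere `S^{d-1}`. -/
def sphereProb (d : ℕ) : Measure (sphere (0 : E d) 1) :=
  ((volume : Measure (E d)).toSphere Set.univ)⁻¹ • (volume : Measure (E d)).toSphere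

/-- Rotational quadratic average of the modulus of the Fourier transform of `I_D`:
`γ̄̂_D(ρ) = ∫_{S^{d-1}} |Î_D(ρ ξ)|² dσ(ξ)`. -/
def avgFT {d : ℕ} (D : Set (E d)) (ρ : ℝ) : ℝ :=
  ∫ ξ : sphere (0 : E d) 1, ‖𝓕 (indC D) (ρ • (ξ : E d))‖ ^ 2 ∂(sphereProb d)

/-- The isotropic covariogram, via its (equivalent) definition as the spherical average
`γ̄_D(u) = ∫_{S^{d-1}} γ_D(u ξ) dσ(ξ)`. -/
def isoCov {d : ℕ} (D : Set (E d)) (u : ℝ) : ℝ :=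
  ∫ ξ : sphere (0 : E d) 1, covariogram D (u • (ξ : E d)) ∂(sphereProb d)

/-- Bessel function of the first kind (power series definition, real order). -/
def besselJ (ν : ℝ) (z : ℝ) : ℝ :=
  ∑' k : ℕ, (-1 : ℝ) ^ k * (z / 2) ^ (ν + 2 * k) / (Nat.factorial k * Real.Gamma (ν + k + 1))

/-- `κ_d`, the volume of the unit ball in `ℝ^d`. -/
def unitBallVol (d : ℕ) : ℝ := Real.pi ^ ((d : ℝ) / 2) / Real.Gamma ((d : ℝ) / 2 + 1)

/-- The image of a set `D` under the rotation given by a matrix `M`. -/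
def rotSet {d : ℕ} (M : Matrix (Fin d) (Fin d) ℝ) (D : Set (E d)) : Set (E d) :=
  (fun y => toE (M.mulVec (EuclideanSpace.equiv (Fin d) ℝ y))) '' D

/-- The special orthogonal group `SO(d)`, as a set of matrices. -/
def SOSet (d : ℕ) : Set (Matrix (Fin d) (Fin d) ℝ) :=
  {M | M ∈ Matrix.specialOrthogonalGroup (Fin d) ℝ}

/-- Borel measurable structure on the space of `d × d` real matrices. -/
instance matrixMeasurableSpace {d : ℕ} : MeasurableSpace (Matrix (Fin d) (Fin d) ℝ) :=
  borel _

instance matrixBorelSpace {d : ℕ} : BorelSpace (Matrix (Fin d) (Fin d) ℝ) := ⟨rfl⟩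

/-!
Fix a bounded function `φ` on `(0, ∞)`. The kernels `κ ∈ L¹(0, ∞)` with `∫ κ(x) φ(Rx) dx → 0` as
`R → ∞` form a closed dilation-invariant subspace. If it contains the Gaussian `exp (-x²)`, then it
contains `exp (-x²) p(exp (-x²))` for every polynomial `p`, hence by Weierstrass approximation in
the variable `exp (-x²)` every compactly supported continuous function, hence all of `L¹(0, ∞)`.
Applied to `φ(r) = r² f(r) - L`, both limits in question say that one particular kernel lies in this
subspace. Since the Gaussian is a superposition of dilates of either of the two kernels, each of
them lies in the subspace exactly when the subspace is all of `L¹(0, ∞)`.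

For the Bessel kernel the superposition comes from the Laplace transform
`∫ exp (-s) s ^ (a - 1) ₀F₁(; a; z s) ds = Γ(a) exp z` with `a = d / 2`.
-/

theorem hasDerivAt_tsum_mul_pow {c : ℕ → ℝ}
    (hc : ∀ z : ℝ, Summable fun k : ℕ => (k + 1) * c (k + 1) * z ^ k) (z : ℝ) :
    HasDerivAt (fun z => ∑' k, c k * z ^ k) (∑' k : ℕ, (k + 1) * c (k + 1) * z ^ k) z := by
  set r := |z| + 1
  have hr : 0 < r := by positivity
  have hterm (x : ℝ) (k : ℕ) :
      c (k + 1) * ((k + 1 : ℕ) * x ^ (k + 1 - 1)) = (k + 1) * c (k + 1) * x ^ k := by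
    push_cast [add_tsub_cancel_right]
    ring
  have hsum (x : ℝ) : Summable fun k : ℕ => c k * (k * x ^ (k - 1)) :=
    (summable_nat_add_iff 1).1 (by simpa only [hterm] using hc x)
  have hderiv := hasDerivAt_tsum_of_isPreconnected (g := fun k z => c k * z ^ k)
    (g' := fun k z => c k * (k * z ^ (k - 1))) (y₀ := 0) (hsum r).abs isOpen_ball
    (convex_ball 0 r).isPreconnected (fun k y _ => (hasDerivAt_pow k y).const_mul (c k))
    (fun k y hy => ?_) (mem_ball_self hr)
    (summable_of_ne_finset_zero (s := {0}) fun k hk => by simp_all)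
    (show z ∈ ball 0 r by simp [r])
  · simpa only [(hsum z).tsum_eq_zero_add, hterm, Nat.cast_zero, zero_mul, mul_zero, zero_add]
      using hderiv
  · have hyr : |y| ≤ r := by simpa using (mem_ball.1 hy).le
    simp only [Real.norm_eq_abs, abs_mul, abs_pow, abs_of_pos hr]
    gcongr

/-- The regularized confluent hypergeometric limit function `₀F₁(; a; z) / Γ(a)`, the entire
function of `z` for which `J_ν(2z) = z ^ ν * confluentLimit (ν + 1) (-z²)`. -/
def confluentLimit (a z : ℝ) : ℝ := ∑' k : ℕ, (k.factorial * Real.Gamma (a + k))⁻¹ * z ^ k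

section ConfluentLimit

theorem besselJ_two_mul {z : ℝ} (hz : 0 < z) (ν : ℝ) :
    besselJ ν (2 * z) = z ^ ν * confluentLimit (ν + 1) (-z ^ 2) := by
  rw [besselJ, confluentLimit, ← tsum_mul_left]
  refine tsum_congr fun k => ?_
  rw [mul_div_cancel_left₀ z two_ne_zero, Real.rpow_add hz, neg_pow (z ^ 2), ← pow_mul,
    add_right_comm]
  norm_cast
  ring

theorem confluentLimit_zero (a : ℝ) : confluentLimit a 0 = (Real.Gamma a)⁻¹ := by
  rw [confluentLimit, tsum_eq_single 0 fun k hk => by simp [hk]]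
  simp

theorem confluentLimit_coeff_succ (a : ℝ) (k : ℕ) :
    (k + 1) * ((k + 1).factorial * Real.Gamma (a + (k + 1 : ℕ)))⁻¹ =
      (k.factorial * Real.Gamma (a + 1 + k))⁻¹ := by
  rw [Nat.factorial_succ, show a + (k + 1 : ℕ) = a + 1 + k by push_cast; ring]
  push_cast
  field_simp

variable {a : ℝ}

theorem confluentLimit_coeff_eq_mul (ha : 0 < a) (k : ℕ) :
    (k.factorial * Real.Gamma (a + k))⁻¹ =
      (a + k) * (k.factorial * Real.Gamma (a + 1 + k))⁻¹ := by
  have hak : 0 < a + k := by positivity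
  rw [add_right_comm, Real.Gamma_add_one hak.ne']
  field_simp

theorem summable_confluentLimit (ha : 0 < a) (z : ℝ) :
    Summable fun k : ℕ => (k.factorial * Real.Gamma (a + k))⁻¹ * z ^ k := by
  refine summable_of_ratio_norm_eventually_le one_half_lt_one ?_
  filter_upwards [eventually_ge_atTop ⌈2 * |z| / a⌉₊] with k hk
  have hz : 2 * |z| ≤ (k + 1) * (a + k) := by
    have := (div_le_iff₀ ha).1 (Nat.ceil_le.1 hk)
    nlinarith [(k.cast_nonneg : (0 : ℝ) ≤ k)]
  have hratio : ((k + 1).factorial * Real.Gamma (a + (k + 1 : ℕ)))⁻¹ * z ^ (k + 1) =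
      z / ((k + 1) * (a + k)) * ((k.factorial * Real.Gamma (a + k))⁻¹ * z ^ k) := by
    rw [confluentLimit_coeff_eq_mul ha k, ← confluentLimit_coeff_succ a k, pow_succ]
    field_simp
  rw [hratio, norm_mul]
  gcongr
  rw [norm_div, Real.norm_eq_abs, Real.norm_of_nonneg (by positivity), div_le_iff₀ (by positivity)]
  linarith

theorem hasDerivAt_confluentLimit (ha : 0 < a) (z : ℝ) :
    HasDerivAt (confluentLimit a) (confluentLimit (a + 1) z) z := by
  have hderiv := hasDerivAt_tsum_mul_pow
    (c := fun k => (k.factorial * Real.Gamma (a + k))⁻¹) (z := z) fun y => by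
      simpa only [confluentLimit_coeff_succ] using
        summable_confluentLimit (by positivity : 0 < a + 1) y
  simp only [confluentLimit_coeff_succ] at hderiv
  exact hderiv

theorem continuous_confluentLimit (ha : 0 < a) : Continuous (confluentLimit a) :=
  continuous_iff_continuousAt.2 fun z => (hasDerivAt_confluentLimit ha z).continuousAt

theorem confluentLimit_eq_add (ha : 0 < a) (z : ℝ) :
    confluentLimit a z = a * confluentLimit (a + 1) z + z * confluentLimit (a + 2) z := by
  have hsum {b : ℝ} (hb : 0 < b) := (summable_confluentLimit hb z).hasSum
  have hshift : HasSum (fun k : ℕ => k * ((k.factorial * Real.Gamma (a + 1 + k))⁻¹ * z ^ k))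
      (z * confluentLimit (a + 2) z) := by
    refine (hasSum_nat_add_iff' 1).1 ?_
    simp only [Finset.sum_range_one, Nat.cast_zero, zero_mul, sub_zero]
    refine ((hsum (by positivity : 0 < a + 2)).mul_left z).congr_fun fun k => ?_
    rw [← one_add_one_eq_two, ← add_assoc, ← confluentLimit_coeff_succ (a + 1)]
    push_cast
    ring
  refine (hsum ha).unique <|
    (((hsum (by positivity : 0 < a + 1)).mul_left a).add hshift).congr_fun fun k => ?_
  rw [confluentLimit_coeff_eq_mul ha]
  ring

theorem hasDerivAt_confluentLimit_neg (ha : 0 < a) (y : ℝ) :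
    HasDerivAt (fun y => confluentLimit a (-y)) (-confluentLimit (a + 1) (-y)) y :=
  ((hasDerivAt_confluentLimit ha (-y)).comp y (hasDerivAt_neg y)).congr_deriv (mul_neg_one _)

theorem antitone_confluentLimit_energy (ha : 1 / 2 ≤ a) :
    Antitone fun y => confluentLimit a (-y) ^ 2 + y * confluentLimit (a + 1) (-y) ^ 2 := by
  have ha0 : 0 < a := by linarith
  refine antitone_of_hasDerivAt_nonpos
    (f' := fun y => (1 - 2 * a) * confluentLimit (a + 1) (-y) ^ 2) (fun y => ?_)
    fun y => mul_nonpos_of_nonpos_of_nonneg (by linarith) (sq_nonneg _)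
  refine (((hasDerivAt_confluentLimit_neg ha0 y).pow 2).add ((hasDerivAt_id y).mul
    ((hasDerivAt_confluentLimit_neg (by positivity : 0 < a + 1) y).pow 2))).congr_deriv ?_
  rw [confluentLimit_eq_add ha0, add_assoc a 1 1, one_add_one_eq_two]
  simp
  ring

theorem abs_Gamma_mul_confluentLimit_le_one (ha : 1 / 2 ≤ a) {y : ℝ} (hy : 0 ≤ y) :
    |Real.Gamma a * confluentLimit a (-y)| ≤ 1 := by
  have hΓ : 0 < Real.Gamma a := Real.Gamma_pos_of_pos (by linarith)
  have henergy := antitone_confluentLimit_energy ha hy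
  simp only [neg_zero, zero_mul, add_zero, confluentLimit_zero] at henergy
  have hsq : confluentLimit a (-y) ^ 2 ≤ (Real.Gamma a)⁻¹ ^ 2 :=
    (le_add_of_nonneg_right (by positivity)).trans henergy
  rw [abs_mul, abs_of_pos hΓ, ← le_inv_mul_iff₀ hΓ, mul_one]
  exact abs_le_of_sq_le_sq hsq (by positivity)

theorem abs_one_sub_Gamma_mul_confluentLimit_le (ha : 1 / 2 ≤ a) {y : ℝ} (hy : 0 ≤ y) :
    |1 - Real.Gamma a * confluentLimit a (-y)| ≤ y / a := by
  have ha0 : 0 < a := by linarith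
  have hderiv (t : ℝ) : HasDerivAt (fun t => Real.Gamma a * confluentLimit a (-t))
      (-(Real.Gamma (a + 1) * confluentLimit (a + 1) (-t) / a)) t := by
    refine ((hasDerivAt_confluentLimit_neg ha0 t).const_mul (Real.Gamma a)).congr_deriv ?_
    rw [Real.Gamma_add_one ha0.ne']
    field_simp
  have hmvt := (convex_Icc 0 y).norm_image_sub_le_of_norm_hasDerivWithin_le
    (C := a⁻¹) (fun t _ => (hderiv t).hasDerivWithinAt) (fun t ht => ?_)
    (right_mem_Icc.2 hy) (left_mem_Icc.2 hy)
  · simpa [confluentLimit_zero, (Real.Gamma_pos_of_pos ha0).ne', abs_of_nonneg hy,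
      div_eq_inv_mul] using hmvt
  · rw [norm_neg, norm_div, Real.norm_of_nonneg ha0.le, div_eq_inv_mul]
    exact mul_le_of_le_one_right (by positivity)
      (abs_Gamma_mul_confluentLimit_le_one (by linarith) ht.1)

theorem integral_exp_neg_mul_rpow_mul_confluentLimit (ha : 0 < a) (z : ℝ) :
    ∫ s in Ioi 0, Real.exp (-s) * s ^ (a - 1) * confluentLimit a (z * s) = Real.exp z := by
  set c : ℕ → ℝ := fun k => (k.factorial * Real.Gamma (a + k))⁻¹
  set F : ℕ → ℝ → ℝ := fun k s => c k * z ^ k * (Real.exp (-s) * s ^ (a + k - 1))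
  have hF {s : ℝ} (hs : 0 < s) :
      ∑' k, F k s = Real.exp (-s) * s ^ (a - 1) * confluentLimit a (z * s) := by
    rw [confluentLimit, ← tsum_mul_left]
    refine tsum_congr fun k => ?_
    simp only [F]
    rw [add_sub_right_comm, Real.rpow_add hs, Real.rpow_natCast, mul_pow]
    ring
  have hGamma (k : ℕ) : ∫ s in Ioi 0, Real.exp (-s) * s ^ (a + k - 1) = Real.Gamma (a + k) :=
    (Real.Gamma_eq_integral (by positivity)).symm
  have hint (k : ℕ) : IntegrableOn (F k) (Ioi 0) :=
    (Real.GammaIntegral_convergent (by positivity)).const_mul _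
  have hcGamma (w : ℝ) (k : ℕ) : c k * w ^ k * Real.Gamma (a + k) = w ^ k / k.factorial := by
    have := (Real.Gamma_pos_of_pos (by positivity : 0 < a + k)).ne'
    simp only [c]
    field_simp
  have hnorm (k : ℕ) : ∫ s in Ioi 0, ‖F k s‖ = |z| ^ k / k.factorial := by
    rw [← hcGamma, ← hGamma, ← integral_const_mul]
    refine setIntegral_congr_fun measurableSet_Ioi fun s (hs : 0 < s) => ?_
    have hc : 0 ≤ c k := by positivity
    simp only [F, norm_mul, norm_pow, Real.norm_eq_abs, abs_of_nonneg hc, Real.abs_exp,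
      abs_of_nonneg (Real.rpow_nonneg hs.le _)]
  have hsum := hasSum_integral_of_summable_integral_norm hint
    (by simpa only [hnorm] using Real.summable_pow_div_factorial |z|)
  simp only [F, integral_const_mul, hGamma, hcGamma] at hsum
  rw [← setIntegral_congr_fun measurableSet_Ioi fun s hs => hF hs]
  exact hsum.unique (Real.exp_eq_exp_ℝ ▸ NormedSpace.expSeries_div_hasSum_exp z)

theorem integrableOn_exp_neg_mul_rpow_mul_confluentLimit (ha : 0 < a) (z : ℝ) :
    IntegrableOn (fun s => Real.exp (-s) * s ^ (a - 1) * confluentLimit a (z * s)) (Ioi 0) := by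
  -- A function that is not integrable would have integral `0`.
  refine Integrable.of_integral_ne_zero ?_
  rw [integral_exp_neg_mul_rpow_mul_confluentLimit ha]
  exact (Real.exp_pos z).ne'

theorem exp_neg_mul_rpow_mul_sub_mul_confluentLimit_eq (ha : 0 < a) (z : ℝ) {s : ℝ} (hs : 0 < s) :
    Real.exp (-s) * s ^ (a - 1) * (s - a) * confluentLimit a (z * s) =
      a * (Real.exp (-s) * s ^ (a + 1 - 1) * confluentLimit (a + 1) (z * s)) +
        z * (Real.exp (-s) * s ^ (a + 2 - 1) * confluentLimit (a + 2) (z * s)) -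
          a * (Real.exp (-s) * s ^ (a - 1) * confluentLimit a (z * s)) := by
  have hpow₁ : s ^ (a + 1 - 1) = s * s ^ (a - 1) := by
    rw [add_sub_right_comm, Real.rpow_add_one hs.ne', mul_comm]
  have hpow₂ : s ^ (a + 2 - 1) = s ^ 2 * s ^ (a - 1) := by
    rw [add_sub_right_comm, Real.rpow_add hs, Real.rpow_two, mul_comm]
  rw [hpow₁, hpow₂]
  linear_combination s * Real.exp (-s) * s ^ (a - 1) * confluentLimit_eq_add ha (z * s)

theorem integrableOn_exp_neg_mul_rpow_mul_sub_mul_confluentLimit (ha : 0 < a) (z : ℝ) :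
    IntegrableOn (fun s => Real.exp (-s) * s ^ (a - 1) * (s - a) * confluentLimit a (z * s))
      (Ioi 0) := by
  have hint {b : ℝ} (hb : 0 < b) := integrableOn_exp_neg_mul_rpow_mul_confluentLimit hb z
  exact IntegrableOn.congr_fun ((((hint (by positivity : 0 < a + 1)).const_mul a).add
    ((hint (by positivity : 0 < a + 2)).const_mul z)).sub ((hint ha).const_mul a))
    (fun s hs => (exp_neg_mul_rpow_mul_sub_mul_confluentLimit_eq ha z hs).symm) measurableSet_Ioi

theorem integral_exp_neg_mul_rpow_mul_sub_mul_confluentLimit (ha : 0 < a) (z : ℝ) :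
    ∫ s in Ioi 0, Real.exp (-s) * s ^ (a - 1) * (s - a) * confluentLimit a (z * s) =
      z * Real.exp z := by
  have hint {b : ℝ} (hb : 0 < b) := integrableOn_exp_neg_mul_rpow_mul_confluentLimit hb z
  have hint₁ := (hint (by positivity : 0 < a + 1)).const_mul a
  have hint₂ := (hint (by positivity : 0 < a + 2)).const_mul z
  rw [setIntegral_congr_fun measurableSet_Ioi fun s hs =>
      exp_neg_mul_rpow_mul_sub_mul_confluentLimit_eq ha z hs,
    integral_sub ?_ ((hint ha).const_mul a), integral_add hint₁ hint₂]
  · simp only [integral_const_mul]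
    rw [integral_exp_neg_mul_rpow_mul_confluentLimit ha,
      integral_exp_neg_mul_rpow_mul_confluentLimit (by positivity),
      integral_exp_neg_mul_rpow_mul_confluentLimit (by positivity)]
    ring
  · exact hint₁.add hint₂

theorem integral_exp_neg_mul_rpow_mul_sub_mul_one_sub (ha : 0 < a) (z : ℝ) :
    ∫ s in Ioi 0, Real.exp (-s) * s ^ (a - 1) * (s - a) *
        (1 - Real.Gamma a * confluentLimit a (z * s)) = -(Real.Gamma a * (z * Real.exp z)) := by
  have hint := integrableOn_exp_neg_mul_rpow_mul_sub_mul_confluentLimit ha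
  have hdiff (s : ℝ) : Real.exp (-s) * s ^ (a - 1) * (s - a) *
      (1 - Real.Gamma a * confluentLimit a (z * s)) =
        Real.Gamma a * (Real.exp (-s) * s ^ (a - 1) * (s - a) * confluentLimit a (0 * s) -
          Real.exp (-s) * s ^ (a - 1) * (s - a) * confluentLimit a (z * s)) := by
    have hΓ := (Real.Gamma_pos_of_pos ha).ne'
    rw [zero_mul, confluentLimit_zero]
    field_simp
  simp only [hdiff]
  rw [integral_const_mul, integral_sub (hint 0) (hint z)]
  simp only [integral_exp_neg_mul_rpow_mul_sub_mul_confluentLimit ha]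
  ring

end ConfluentLimit

/-- The average of `φ` against the kernel `κ` at scale `R`; substituting `r = R * x`, it is
`R⁻¹ * ∫ r in Ioi 0, κ (r / R) * φ r` when `0 < R`. -/
def dilationAverage (κ φ : ℝ → ℝ) (R : ℝ) : ℝ := ∫ x in Ioi 0, κ x * φ (R * x)

section DilationAverage

variable {φ κ : ℝ → ℝ} {C R : ℝ}

theorem integrableOn_mul_comp_mul_left (hφ : Measurable φ) (hC : ∀ x, 0 < x → |φ x| ≤ C)
    (hκ : IntegrableOn κ (Ioi 0)) (hR : 0 < R) :
    IntegrableOn (fun x => κ x * φ (R * x)) (Ioi 0) := by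
  refine Integrable.mul_bdd (c := C) hκ
    (by fun_prop : Measurable fun x => φ (R * x)).aestronglyMeasurable ?_
  filter_upwards [ae_restrict_mem measurableSet_Ioi] with x hx
  exact hC _ (mul_pos hR hx)

theorem abs_dilationAverage_le (hC : ∀ x, 0 < x → |φ x| ≤ C) (hκ : IntegrableOn κ (Ioi 0))
    (hR : 0 < R) : |dilationAverage κ φ R| ≤ (∫ x in Ioi 0, |κ x|) * C := by
  rw [dilationAverage, ← integral_mul_const]
  refine norm_integral_le_of_norm_le (f := fun x => κ x * φ (R * x)) (hκ.abs.mul_const C) ?_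
  filter_upwards [ae_restrict_mem measurableSet_Ioi] with x hx
  rw [norm_mul]
  exact mul_le_mul_of_nonneg_left (hC _ (mul_pos hR hx)) (abs_nonneg _)

theorem measurable_dilationAverage (hφ : Measurable φ) (hκ : Measurable κ) :
    Measurable (dilationAverage κ φ) := by
  have hjoint : Measurable fun p : ℝ × ℝ => κ p.2 * φ (p.1 * p.2) := by fun_prop
  exact hjoint.stronglyMeasurable.integral_prod_right.measurable

theorem dilationAverage_comp_mul_left (κ φ : ℝ → ℝ) {b : ℝ} (hb : 0 < b) (R : ℝ) :
    dilationAverage (fun x => κ (b * x)) φ R = b⁻¹ * dilationAverage κ φ (R / b) := by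
  have hscale := integral_comp_mul_left_Ioi (fun x => κ x * φ (R / b * x)) 0 hb
  have hcancel (x : ℝ) : R / b * (b * x) = R * x := by field_simp
  simp only [hcancel, mul_zero, smul_eq_mul] at hscale
  exact hscale

end DilationAverage

section Superposition

variable {T : Type*} [MeasurableSpace T] {μ : Measure T} {w b : T → ℝ}
  {φ κ : ℝ → ℝ} {C : ℝ}

theorem integrable_mul_comp_mul_prod (hw : Measurable w) (hb : Measurable b)
    (hb_pos : ∀ᵐ t ∂μ, 0 < b t) (hwb : Integrable (fun t => w t / b t) μ)
    (hκ_meas : Measurable κ) (hκ : IntegrableOn κ (Ioi 0)) :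
    Integrable (fun p : T × ℝ => w p.1 * κ (b p.1 * p.2)) (μ.prod (volume.restrict (Ioi 0))) := by
  have hnorm {t : T} (ht : 0 < b t) :
      ∫ x in Ioi 0, ‖w t * κ (b t * x)‖ = |w t / b t| * ∫ x in Ioi 0, |κ x| := by
    have hscale := integral_comp_mul_left_Ioi (fun x => |κ x|) 0 ht
    rw [mul_zero, smul_eq_mul] at hscale
    simp only [norm_mul, Real.norm_eq_abs, integral_const_mul]
    rw [hscale, abs_div, abs_of_pos ht]
    ring
  rw [integrable_prod_iff (by fun_prop : Measurable _).aestronglyMeasurable]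
  constructor
  · filter_upwards [hb_pos] with t ht
    refine Integrable.const_mul ?_ _
    exact (integrableOn_Ioi_comp_mul_left_iff κ 0 ht).2 (by rwa [mul_zero])
  · refine (hwb.abs.mul_const (∫ x in Ioi 0, |κ x|)).congr ?_
    filter_upwards [hb_pos] with t ht
    exact (hnorm ht).symm

theorem dilationAverage_superposition [SFinite μ] (hφ : Measurable φ) (hC : ∀ x, 0 < x → |φ x| ≤ C)
    (hw : Measurable w) (hb : Measurable b) (hb_pos : ∀ᵐ t ∂μ, 0 < b t)
    (hwb : Integrable (fun t => w t / b t) μ) (hκ_meas : Measurable κ)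
    (hκ : IntegrableOn κ (Ioi 0)) {R : ℝ} (hR : 0 < R) :
    dilationAverage (fun x => ∫ t, w t * κ (b t * x) ∂μ) φ R =
      ∫ t, w t / b t * dilationAverage κ φ (R / b t) ∂μ := by
  have hint : Integrable (fun p : T × ℝ => w p.1 * κ (b p.1 * p.2) * φ (R * p.2))
      (μ.prod (volume.restrict (Ioi 0))) := by
    refine (integrable_mul_comp_mul_prod hw hb hb_pos hwb hκ_meas hκ).mul_bdd (c := C)
      (by fun_prop : Measurable fun p : T × ℝ => φ (R * p.2)).aestronglyMeasurable ?_
    filter_upwards [Measure.quasiMeasurePreserving_snd.ae (ae_restrict_mem measurableSet_Ioi)]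
      with p hp
    exact hC _ (mul_pos hR hp)
  simp only [dilationAverage, ← integral_mul_const]
  rw [← integral_integral_swap hint]
  refine integral_congr_ae ?_
  filter_upwards [hb_pos] with t ht
  have hdilate := dilationAverage_comp_mul_left κ φ ht R
  simp only [dilationAverage] at hdilate
  simp only [mul_assoc, integral_const_mul]
  rw [hdilate]
  ring

theorem integral_Ioi_superposition [SFinite μ] (hw : Measurable w) (hb : Measurable b)
    (hb_pos : ∀ᵐ t ∂μ, 0 < b t) (hwb : Integrable (fun t => w t / b t) μ)
    (hκ_meas : Measurable κ) (hκ : IntegrableOn κ (Ioi 0)) :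
    ∫ x in Ioi 0, ∫ t, w t * κ (b t * x) ∂μ = (∫ t, w t / b t ∂μ) * ∫ x in Ioi 0, κ x := by
  simpa [dilationAverage, integral_mul_const] using
    dilationAverage_superposition (φ := 1) (C := 1) measurable_const (by simp)
      hw hb hb_pos hwb hκ_meas hκ one_pos

end Superposition

/-- The kernels against which the averages of `φ` at scale `R` tend to zero as `R → ∞`. For bounded
`φ` they form a closed subspace of `L¹(0, ∞)` that is invariant under dilations. -/
structure IsNullKernel (φ κ : ℝ → ℝ) : Prop where
  integrableOn : IntegrableOn κ (Ioi 0)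
  tendsto : Tendsto (dilationAverage κ φ) atTop (𝓝 0)

namespace IsNullKernel

variable {φ κ κ' : ℝ → ℝ} {C : ℝ}

theorem congr (h : IsNullKernel φ κ) (heq : EqOn κ κ' (Ioi 0)) : IsNullKernel φ κ' where
  integrableOn := h.integrableOn.congr_fun heq measurableSet_Ioi
  tendsto := h.tendsto.congr fun R => setIntegral_congr_fun measurableSet_Ioi fun x hx => by
    simp only [heq hx]

theorem const_mul (h : IsNullKernel φ κ) (c : ℝ) : IsNullKernel φ fun x => c * κ x where
  integrableOn := h.integrableOn.const_mul c
  tendsto := by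
    rw [← mul_zero c]
    refine (h.tendsto.const_mul c).congr fun R => ?_
    simp only [dilationAverage, mul_assoc, integral_const_mul]

theorem add (hφ : Measurable φ) (hC : ∀ x, 0 < x → |φ x| ≤ C) (h : IsNullKernel φ κ)
    (h' : IsNullKernel φ κ') : IsNullKernel φ fun x => κ x + κ' x where
  integrableOn := h.integrableOn.add h'.integrableOn
  tendsto := by
    rw [← add_zero (0 : ℝ)]
    refine (h.tendsto.add h'.tendsto).congr' ?_
    filter_upwards [eventually_gt_atTop 0] with R hR
    simp only [dilationAverage, add_mul]
    exact (integral_add (integrableOn_mul_comp_mul_left hφ hC h.integrableOn hR)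
      (integrableOn_mul_comp_mul_left hφ hC h'.integrableOn hR)).symm

theorem comp_mul_left (h : IsNullKernel φ κ) {b : ℝ} (hb : 0 < b) :
    IsNullKernel φ fun x => κ (b * x) where
  integrableOn := (integrableOn_Ioi_comp_mul_left_iff κ 0 hb).2 (by simpa using h.integrableOn)
  tendsto := by
    rw [← mul_zero b⁻¹]
    exact ((h.tendsto.comp (tendsto_id.atTop_div_const hb)).const_mul b⁻¹).congr fun R =>
      (dilationAverage_comp_mul_left κ φ hb R).symm

theorem of_forall_approx (hφ : Measurable φ) (hC : ∀ x, 0 < x → |φ x| ≤ C)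
    (hκ : IntegrableOn κ (Ioi 0))
    (happrox : ∀ ε > 0, ∃ κ', IsNullKernel φ κ' ∧ ∫ x in Ioi 0, |κ x - κ' x| ≤ ε) :
    IsNullKernel φ κ where
  integrableOn := hκ
  tendsto := by
    have hC0 : 0 ≤ C := (abs_nonneg _).trans (hC 1 one_pos)
    rw [Metric.tendsto_nhds]
    intro ε hε
    obtain ⟨κ', hκ', hdist⟩ := happrox (ε / 2 / (C + 1)) (by positivity)
    filter_upwards [Metric.tendsto_nhds.1 hκ'.tendsto (ε / 2) (by positivity),
      eventually_gt_atTop 0] with R hsmall hR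
    have hsub : dilationAverage κ φ R - dilationAverage κ' φ R =
        dilationAverage (fun x => κ x - κ' x) φ R := by
      simp only [dilationAverage, sub_mul]
      exact (integral_sub (integrableOn_mul_comp_mul_left hφ hC hκ hR)
        (integrableOn_mul_comp_mul_left hφ hC hκ'.integrableOn hR)).symm
    have hclose : |dilationAverage κ φ R - dilationAverage κ' φ R| ≤ ε / 2 := by
      rw [hsub]
      calc |dilationAverage (fun x => κ x - κ' x) φ R|
          ≤ (∫ x in Ioi 0, |κ x - κ' x|) * C :=
            abs_dilationAverage_le hC (hκ.sub hκ'.integrableOn) hR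
        _ ≤ ε / 2 / (C + 1) * (C + 1) := by gcongr; linarith
        _ = ε / 2 := by field_simp
    rw [dist_zero_right, Real.norm_eq_abs] at hsmall ⊢
    linarith [abs_sub_abs_le_abs_sub (dilationAverage κ φ R) (dilationAverage κ' φ R)]

theorem superposition {T : Type*} [MeasurableSpace T] {μ : Measure T} [SFinite μ] {w b : T → ℝ}
    (hφ : Measurable φ) (hC : ∀ x, 0 < x → |φ x| ≤ C) (hκ_meas : Measurable κ)
    (h : IsNullKernel φ κ) (hw : Measurable w) (hb : Measurable b) (hb_pos : ∀ᵐ t ∂μ, 0 < b t)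
    (hwb : Integrable (fun t => w t / b t) μ) :
    IsNullKernel φ fun x => ∫ t, w t * κ (b t * x) ∂μ where
  integrableOn :=
    (integrable_mul_comp_mul_prod hw hb hb_pos hwb hκ_meas h.integrableOn).integral_prod_right
  tendsto := by
    have hlim : Tendsto (fun R => ∫ t, w t / b t * dilationAverage κ φ (R / b t) ∂μ) atTop
        (𝓝 (∫ _, 0 ∂μ)) := by
      refine tendsto_integral_filter_of_dominated_convergence
        (fun t => |w t / b t| * ((∫ x in Ioi 0, |κ x|) * C)) (.of_forall fun R => ?_) ?_
        (hwb.abs.mul_const _) ?_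
      · have := measurable_dilationAverage hφ hκ_meas
        exact (by fun_prop : Measurable _).aestronglyMeasurable
      · filter_upwards [eventually_gt_atTop 0] with R hR
        filter_upwards [hb_pos] with t ht
        rw [norm_mul]
        exact mul_le_mul_of_nonneg_left (abs_dilationAverage_le hC h.integrableOn (div_pos hR ht))
          (abs_nonneg _)
      · filter_upwards [hb_pos] with t ht
        simpa using (h.tendsto.comp (tendsto_id.atTop_div_const ht)).const_mul (w t / b t)
    rw [integral_zero] at hlim
    refine hlim.congr' ?_
    filter_upwards [eventually_gt_atTop 0] with R hR
    exact (dilationAverage_superposition hφ hC hw hb hb_pos hwb hκ_meas h.integrableOn hR).symm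

end IsNullKernel

section Gaussian

variable {φ κ : ℝ → ℝ} {C : ℝ}

theorem IsNullKernel.gaussian_mul_polynomial (hφ : Measurable φ) (hC : ∀ x, 0 < x → |φ x| ≤ C)
    (h : IsNullKernel φ fun x => Real.exp (-x ^ 2)) (p : Polynomial ℝ) :
    IsNullKernel φ fun x => Real.exp (-x ^ 2) * p.eval (Real.exp (-x ^ 2)) := by
  induction p using Polynomial.induction_on' with
  | add p q hp hq =>
    simp only [Polynomial.eval_add, mul_add]
    exact hp.add hφ hC hq
  | monomial n c =>
    refine ((h.comp_mul_left (by positivity : 0 < √(n + 1 : ℝ))).const_mul c).congr fun x _ => ?_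
    simp only [Polynomial.eval_monomial]
    rw [← Real.exp_nat_mul, mul_pow, Real.sq_sqrt (by positivity), mul_left_comm, ← Real.exp_add]
    ring_nf

theorem continuous_comp_sqrt_neg_log_div {u : ℝ → ℝ} (hu : Continuous u)
    (hu_zero : ∀ᶠ x in atTop, u x = 0) : Continuous fun y => u (√(-Real.log y)) / y := by
  refine continuous_iff_continuousAt.2 fun y => ?_
  obtain rfl | hy := eq_or_ne y 0
  · have hvanish : ∀ᶠ y in 𝓝[≠] (0 : ℝ), u (√(-Real.log y)) = 0 :=
      (Real.tendsto_sqrt_atTop.comp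
        (tendsto_neg_atBot_atTop.comp Real.tendsto_log_nhdsNE_zero)).eventually hu_zero
    refine (continuousAt_const (y := (0 : ℝ))).congr ?_
    filter_upwards [eventually_nhdsWithin_iff.1 hvanish] with y hy
    obtain rfl | hy0 := eq_or_ne y 0
    · simp
    · rw [hy hy0, zero_div]
  · have hlog := Real.continuousAt_log hy
    exact (hu.continuousAt.comp hlog.neg.sqrt).div continuousAt_id hy

theorem IsNullKernel.of_continuous (hφ : Measurable φ) (hC : ∀ x, 0 < x → |φ x| ≤ C)
    (h : IsNullKernel φ fun x => Real.exp (-x ^ 2)) {u : ℝ → ℝ} (hu : Continuous u)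
    (hu_int : IntegrableOn u (Ioi 0)) (hu_zero : ∀ᶠ x in atTop, u x = 0) : IsNullKernel φ u := by
  set F : ℝ → ℝ := fun y => u (√(-Real.log y)) / y
  have hF : Continuous F := continuous_comp_sqrt_neg_log_div hu hu_zero
  have hu_eq {x : ℝ} (hx : 0 < x) : u x = Real.exp (-x ^ 2) * F (Real.exp (-x ^ 2)) := by
    simp only [F]
    rw [Real.log_exp, neg_neg, Real.sqrt_sq hx.le]
    field_simp
  refine .of_forall_approx hφ hC hu_int fun ε hε => ?_
  obtain ⟨p, hp⟩ := exists_polynomial_near_of_continuousOn 0 1 F hF.continuousOn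
    (ε / (√π / 2)) (by positivity)
  have hp_null := h.gaussian_mul_polynomial hφ hC p
  refine ⟨_, hp_null, ?_⟩
  have hpoint {x : ℝ} (hx : 0 < x) : |u x - Real.exp (-x ^ 2) * p.eval (Real.exp (-x ^ 2))| ≤
      ε / (√π / 2) * Real.exp (-x ^ 2) := by
    rw [hu_eq hx, ← mul_sub, abs_mul, Real.abs_exp, abs_sub_comm, mul_comm]
    gcongr
    exact (hp _ ⟨by positivity, Real.exp_le_one_iff.2 (by simpa using sq_nonneg x)⟩).le
  calc ∫ x in Ioi 0, |u x - Real.exp (-x ^ 2) * p.eval (Real.exp (-x ^ 2))|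
      ≤ ∫ x in Ioi 0, ε / (√π / 2) * Real.exp (-x ^ 2) :=
        setIntegral_mono_on (hu_int.sub hp_null.integrableOn).abs
          (h.integrableOn.const_mul _) measurableSet_Ioi fun x hx => hpoint hx
    _ = ε := by
        have hgauss := integral_gaussian_Ioi 1
        simp only [neg_mul, one_mul, div_one] at hgauss
        rw [integral_const_mul, hgauss]
        field_simp

theorem IsNullKernel.of_gaussian (hφ : Measurable φ) (hC : ∀ x, 0 < x → |φ x| ≤ C)
    (h : IsNullKernel φ fun x => Real.exp (-x ^ 2)) (hκ : IntegrableOn κ (Ioi 0)) :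
    IsNullKernel φ κ := by
  refine .of_forall_approx hφ hC hκ fun ε hε => ?_
  obtain ⟨u, hu_supp, hu_dist, hu_cont, hu_int⟩ :=
    hκ.integrable_indicator measurableSet_Ioi |>.exists_hasCompactSupport_integral_sub_le hε
  have hu_zero : ∀ᶠ x in atTop, u x = 0 :=
    atTop_le_cocompact <|
      Filter.coclosedCompact_eq_cocompact (X := ℝ) ▸ hasCompactSupport_iff_eventuallyEq.1 hu_supp
  refine ⟨u, h.of_continuous hφ hC hu_cont hu_int.integrableOn hu_zero, ?_⟩
  calc ∫ x in Ioi 0, |κ x - u x|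
      = ∫ x in Ioi 0, ‖(Ioi 0).indicator κ x - u x‖ :=
        setIntegral_congr_fun measurableSet_Ioi fun x hx => by
          simp only [indicator_of_mem hx, Real.norm_eq_abs]
    _ ≤ ∫ x, ‖(Ioi 0).indicator κ x - u x‖ := setIntegral_le_integral
        ((hκ.integrable_indicator measurableSet_Ioi).sub hu_int).norm
        (.of_forall fun x => norm_nonneg _)
    _ ≤ ε := hu_dist

end Gaussian

/-- The kernel on `(0, ∞)` whose dilation averages are the Cesàro means
`R⁻¹ * ∫ r in Ioc 0 R, φ r`. -/
def cesaroKernel : ℝ → ℝ := (Ioc 0 1).indicator 1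

section CesaroKernel

variable {φ : ℝ → ℝ} {C : ℝ}

theorem measurable_cesaroKernel : Measurable cesaroKernel :=
  measurable_one.indicator measurableSet_Ioc

theorem integrableOn_cesaroKernel : IntegrableOn cesaroKernel (Ioi 0) :=
  ((integrableOn_const (by simp)).integrable_indicator measurableSet_Ioc).integrableOn

theorem dilationAverage_cesaroKernel (φ : ℝ → ℝ) {R : ℝ} (hR : 0 < R) :
    dilationAverage cesaroKernel φ R = R⁻¹ * ∫ r in Ioc 0 R, φ r := by
  have hrestrict : dilationAverage cesaroKernel φ R = ∫ x in Ioc 0 1, φ (R * x) := by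
    rw [← inter_eq_self_of_subset_right (Ioc_subset_Ioi_self : Ioc (0 : ℝ) 1 ⊆ Ioi 0),
      ← setIntegral_indicator measurableSet_Ioc]
    refine setIntegral_congr_fun measurableSet_Ioi fun x _ => ?_
    simp [cesaroKernel, indicator_apply]
  rw [hrestrict, ← intervalIntegral.integral_of_le zero_le_one,
    intervalIntegral.integral_comp_mul_left φ hR.ne', mul_zero, mul_one,
    intervalIntegral.integral_of_le hR.le, smul_eq_mul]

theorem integral_cesaroKernel : ∫ x in Ioi 0, cesaroKernel x = 1 := by
  simpa [dilationAverage] using dilationAverage_cesaroKernel 1 one_pos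

theorem integral_Ioi_mul_exp_neg_sq {x : ℝ} (hx : 0 ≤ x) :
    ∫ t in Ioi x, 2 * t * Real.exp (-t ^ 2) = Real.exp (-x ^ 2) := by
  have hderiv (t : ℝ) :
      HasDerivAt (fun t => -Real.exp (-t ^ 2)) (2 * t * Real.exp (-t ^ 2)) t := by
    refine (hasDerivAt_pow 2 t).neg.exp.neg.congr_deriv ?_
    simp
    ring
  have hlim : Tendsto (fun t : ℝ => -Real.exp (-t ^ 2)) atTop (𝓝 (-0)) :=
    (Real.tendsto_exp_neg_atTop_nhds_zero.comp (tendsto_pow_atTop two_ne_zero)).neg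
  rw [integral_Ioi_of_hasDerivAt_of_nonneg' (fun t _ => hderiv t) (fun t ht => ?_) hlim]
  · ring
  · have : 0 < t := hx.trans_lt ht
    positivity

theorem integral_cesaroKernel_inv_mul {x : ℝ} (hx : 0 < x) :
    ∫ t in Ioi 0, 2 * t * Real.exp (-t ^ 2) * cesaroKernel (t⁻¹ * x) = Real.exp (-x ^ 2) := by
  rw [← integral_Ioi_mul_exp_neg_sq hx.le, ← integral_Ici_eq_integral_Ioi (x := x),
    ← inter_eq_self_of_subset_right (Ici_subset_Ioi.2 hx),
    ← setIntegral_indicator measurableSet_Ici]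
  refine setIntegral_congr_fun measurableSet_Ioi fun t (ht : 0 < t) => ?_
  have hmem : t⁻¹ * x ∈ Ioc 0 1 ↔ t ∈ Ici x := by
    rw [mem_Ioc, inv_mul_le_one₀ ht, mem_Ici]
    exact and_iff_right (by positivity)
  simp only [cesaroKernel, indicator_apply, hmem, Pi.one_apply, mul_ite, mul_one, mul_zero]

theorem IsNullKernel.gaussian_of_cesaroKernel (hφ : Measurable φ)
    (hC : ∀ x, 0 < x → |φ x| ≤ C) (h : IsNullKernel φ cesaroKernel) :
    IsNullKernel φ fun x => Real.exp (-x ^ 2) := by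
  have hmoment : IntegrableOn (fun t => 2 * t * Real.exp (-t ^ 2) / t⁻¹) (Ioi 0) := by
    refine IntegrableOn.congr_fun ((integrableOn_rpow_mul_exp_neg_rpow
      (by norm_num : (-1 : ℝ) < 2) two_pos).const_mul 2) (fun t _ => ?_) measurableSet_Ioi
    simp only [Real.rpow_two]
    field_simp
  exact (h.superposition hφ hC measurable_cesaroKernel (by fun_prop) measurable_inv
    ((ae_restrict_mem measurableSet_Ioi).mono fun t ht => inv_pos.2 ht) hmoment).congr
    fun x hx => integral_cesaroKernel_inv_mul hx

end CesaroKernel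

/-- The kernel `(1 - Γ(a) J_{a-1}(2πx) / (πx) ^ (a - 1)) / x²` on `(0, ∞)`, see
`sq_mul_besselKernel`. -/
def besselKernel (a x : ℝ) : ℝ := (1 - Real.Gamma a * confluentLimit a (-(π * x) ^ 2)) / x ^ 2

section BesselKernel

variable {a : ℝ} {φ : ℝ → ℝ} {C : ℝ}

theorem sq_mul_besselKernel (a : ℝ) {x : ℝ} (hx : 0 < x) :
    x ^ 2 * besselKernel a x =
      1 - Real.Gamma a * besselJ (a - 1) (2 * (π * x)) / (π * x) ^ (a - 1) := by
  rw [besselKernel, besselJ_two_mul (by positivity), sub_add_cancel]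
  field_simp

theorem measurable_besselKernel (ha : 0 < a) : Measurable (besselKernel a) := by
  have := (continuous_confluentLimit ha).measurable
  unfold besselKernel
  fun_prop

theorem abs_besselKernel_le (ha : 1 / 2 ≤ a) {x : ℝ} (hx : x ≠ 0) :
    |besselKernel a x| ≤ (2 * π ^ 2 + 2) * (1 + x ^ 2)⁻¹ := by
  have ha0 : 0 < a := by linarith
  have hsmall : |1 - Real.Gamma a * confluentLimit a (-(π * x) ^ 2)| ≤ 2 * π ^ 2 * x ^ 2 :=
    calc |1 - Real.Gamma a * confluentLimit a (-(π * x) ^ 2)|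
        ≤ (π * x) ^ 2 / a := abs_one_sub_Gamma_mul_confluentLimit_le ha (sq_nonneg _)
      _ ≤ 2 * π ^ 2 * x ^ 2 := by
          rw [div_le_iff₀ ha0]
          nlinarith [sq_nonneg (π * x)]
  have hlarge : |1 - Real.Gamma a * confluentLimit a (-(π * x) ^ 2)| ≤ 2 := by
    have := abs_le.1 (abs_Gamma_mul_confluentLimit_le_one ha (sq_nonneg (π * x)))
    exact abs_le.2 ⟨by linarith, by linarith⟩
  rw [besselKernel, abs_div, abs_of_pos (by positivity : 0 < x ^ 2), ← div_eq_mul_inv,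
    div_le_div_iff₀ (by positivity) (by positivity)]
  linarith [mul_le_mul_of_nonneg_right hlarge (sq_nonneg x)]

theorem integrableOn_besselKernel (ha : 1 / 2 ≤ a) : IntegrableOn (besselKernel a) (Ioi 0) := by
  refine (integrable_inv_one_add_sq.const_mul (2 * π ^ 2 + 2)).integrableOn.mono'
    (measurable_besselKernel (by linarith)).aestronglyMeasurable ?_
  filter_upwards [ae_restrict_mem measurableSet_Ioi] with x hx
  exact abs_besselKernel_le ha (ne_of_gt hx)

theorem integral_besselKernel_sqrt_mul (ha : 0 < a) {x : ℝ} (hx : 0 < x) :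
    ∫ s in Ioi 0, Real.exp (-s) * s ^ a * (s - a) * besselKernel a (√s / π * x) =
      π ^ 2 * Real.Gamma a * Real.exp (-x ^ 2) := by
  calc ∫ s in Ioi 0, Real.exp (-s) * s ^ a * (s - a) * besselKernel a (√s / π * x)
      = ∫ s in Ioi 0, π ^ 2 / x ^ 2 * (Real.exp (-s) * s ^ (a - 1) * (s - a) *
          (1 - Real.Gamma a * confluentLimit a (-x ^ 2 * s))) := by
        refine setIntegral_congr_fun measurableSet_Ioi fun s (hs : 0 < s) => ?_
        have harg : (π * (√s / π * x)) ^ 2 = x ^ 2 * s := by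
          field_simp
          rw [Real.sq_sqrt hs.le]
        have hden : (√s / π * x) ^ 2 = s * x ^ 2 / π ^ 2 := by
          field_simp
          rw [Real.sq_sqrt hs.le]
        simp only [besselKernel]
        rw [harg, hden, ← neg_mul, Real.rpow_sub_one hs.ne']
        field_simp
    _ = π ^ 2 * Real.Gamma a * Real.exp (-x ^ 2) := by
        rw [integral_const_mul, integral_exp_neg_mul_rpow_mul_sub_mul_one_sub ha]
        field_simp

theorem exp_neg_mul_rpow_mul_sub_div_sqrt_eq (a : ℝ) {s : ℝ} (hs : 0 < s) :
    Real.exp (-s) * s ^ a * (s - a) / (√s / π) =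
      π * (Real.exp (-s) * s ^ (a + 3 / 2 - 1)) -
        π * a * (Real.exp (-s) * s ^ (a + 1 / 2 - 1)) := by
  have hpow : s ^ (a + 1 / 2 - 1) = s ^ a / √s := by
    rw [Real.sqrt_eq_rpow, ← Real.rpow_sub hs]
    ring_nf
  have hpow' : s ^ (a + 3 / 2 - 1) = s * (s ^ a / √s) := by
    rw [← hpow, mul_comm, ← Real.rpow_add_one hs.ne']
    ring_nf
  rw [hpow, hpow']
  field_simp

theorem integrableOn_exp_neg_mul_rpow_mul_sub_div_sqrt (ha : 0 < a) :
    IntegrableOn (fun s => Real.exp (-s) * s ^ a * (s - a) / (√s / π)) (Ioi 0) :=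
  IntegrableOn.congr_fun
    (((Real.GammaIntegral_convergent (by positivity : 0 < a + 3 / 2)).const_mul π).sub
      ((Real.GammaIntegral_convergent (by positivity : 0 < a + 1 / 2)).const_mul (π * a)))
    (fun _ hs => (exp_neg_mul_rpow_mul_sub_div_sqrt_eq a hs).symm) measurableSet_Ioi

theorem integral_exp_neg_mul_rpow_mul_sub_div_sqrt (ha : 0 < a) :
    ∫ s in Ioi 0, Real.exp (-s) * s ^ a * (s - a) / (√s / π) =
      π / 2 * Real.Gamma (a + 1 / 2) := by
  have hΓ : Real.Gamma (a + 3 / 2) = (a + 1 / 2) * Real.Gamma (a + 1 / 2) := by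
    rw [← Real.Gamma_add_one (by positivity)]
    ring_nf
  rw [setIntegral_congr_fun measurableSet_Ioi fun s hs =>
      exp_neg_mul_rpow_mul_sub_div_sqrt_eq a hs,
    integral_sub ((Real.GammaIntegral_convergent (by positivity)).const_mul π)
      ((Real.GammaIntegral_convergent (by positivity)).const_mul (π * a)),
    integral_const_mul, integral_const_mul, ← Real.Gamma_eq_integral (by positivity),
    ← Real.Gamma_eq_integral (by positivity), hΓ]
  ring

theorem ae_sqrt_div_pi_pos : ∀ᵐ s ∂volume.restrict (Ioi (0 : ℝ)), 0 < √s / π :=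
  (ae_restrict_mem measurableSet_Ioi).mono fun _ hs =>
    div_pos (Real.sqrt_pos.2 hs) Real.pi_pos

theorem integral_besselKernel (ha : 1 / 2 ≤ a) :
    π ^ (-(3 : ℝ) / 2) * (Real.Gamma (a + 1 / 2) / Real.Gamma a) *
      ∫ x in Ioi 0, besselKernel a x = 1 := by
  have ha0 : 0 < a := by linarith
  have hmass := integral_Ioi_superposition (by fun_prop) (by fun_prop) ae_sqrt_div_pi_pos
    (integrableOn_exp_neg_mul_rpow_mul_sub_div_sqrt ha0) (measurable_besselKernel ha0)
    (integrableOn_besselKernel ha)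
  have hgauss := integral_gaussian_Ioi 1
  simp only [neg_mul, one_mul, div_one] at hgauss
  rw [setIntegral_congr_fun measurableSet_Ioi fun x hx => integral_besselKernel_sqrt_mul ha0 hx,
    integral_const_mul, hgauss, integral_exp_neg_mul_rpow_mul_sub_div_sqrt ha0] at hmass
  have hpi : π ^ (-(3 : ℝ) / 2) * (π * √π) = 1 := by
    rw [Real.sqrt_eq_rpow, ← Real.rpow_one_add' Real.pi_pos.le (by norm_num),
      ← Real.rpow_add Real.pi_pos]
    norm_num
  have hmass' : Real.Gamma (a + 1 / 2) / Real.Gamma a * ∫ x in Ioi 0, besselKernel a x =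
      π * √π := by
    have hΓ : 0 < Real.Gamma a := Real.Gamma_pos_of_pos ha0
    rw [div_mul_eq_mul_div, div_eq_iff hΓ.ne']
    refine mul_left_cancel₀ (by positivity : π / 2 ≠ 0) ?_
    linear_combination -hmass
  rw [mul_assoc, hmass', hpi]

theorem IsNullKernel.gaussian_of_besselKernel (ha : 0 < a) (hφ : Measurable φ)
    (hC : ∀ x, 0 < x → |φ x| ≤ C) (h : IsNullKernel φ (besselKernel a)) :
    IsNullKernel φ fun x => Real.exp (-x ^ 2) := by
  have hsuper := h.superposition hφ hC (measurable_besselKernel ha) (by fun_prop) (by fun_prop)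
    ae_sqrt_div_pi_pos (integrableOn_exp_neg_mul_rpow_mul_sub_div_sqrt ha)
  refine (hsuper.const_mul (π ^ 2 * Real.Gamma a)⁻¹).congr fun x hx => ?_
  simp only [integral_besselKernel_sqrt_mul ha hx]
  exact inv_mul_cancel_left₀ (by positivity) _

theorem isNullKernel_cesaroKernel_iff_besselKernel (ha : 1 / 2 ≤ a) (hφ : Measurable φ)
    (hC : ∀ x, 0 < x → |φ x| ≤ C) :
    IsNullKernel φ cesaroKernel ↔ IsNullKernel φ (besselKernel a) :=
  ⟨fun h => .of_gaussian hφ hC (h.gaussian_of_cesaroKernel hφ hC) (integrableOn_besselKernel ha),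
    fun h => .of_gaussian hφ hC (h.gaussian_of_besselKernel (by linarith) hφ hC)
      integrableOn_cesaroKernel⟩

theorem integral_one_sub_besselJ_mul (a : ℝ) (f : ℝ → ℝ) {h : ℝ} (hh : 0 < h) :
    ∫ r in Ioi 0, (1 - Real.Gamma a * besselJ (a - 1) (2 * π * h * r) / (π * h * r) ^ (a - 1)) *
        f r = h * dilationAverage (besselKernel a) (fun r => r ^ 2 * f r) h⁻¹ := by
  have hscale := dilationAverage_comp_mul_left (besselKernel a) (fun r => r ^ 2 * f r) hh 1
  rw [one_div] at hscale
  calc _ = ∫ r in Ioi 0, h ^ 2 * (besselKernel a (h * r) * ((1 * r) ^ 2 * f (1 * r))) :=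
        setIntegral_congr_fun measurableSet_Ioi fun r (hr : 0 < r) => by
          simp only [one_mul]
          rw [show 2 * π * h * r = 2 * (π * (h * r)) by ring, mul_assoc π h r,
            ← sq_mul_besselKernel a (mul_pos hh hr)]
          ring
    _ = h ^ 2 * dilationAverage (fun r => besselKernel a (h * r)) (fun r => r ^ 2 * f r) 1 :=
        integral_const_mul _ _
    _ = h * dilationAverage (besselKernel a) (fun r => r ^ 2 * f r) h⁻¹ := by
        rw [hscale]
        field_simp

end BesselKernel

section Limit

variable {g κ : ℝ → ℝ} {c C L : ℝ}

theorem isNullKernel_sub_const_iff (hg : Measurable g) (hC : ∀ x, 0 < x → |g x| ≤ C)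
    (hκ : IntegrableOn κ (Ioi 0)) (hc : c * ∫ x in Ioi 0, κ x = 1) :
    IsNullKernel (fun x => g x - L) κ ↔
      Tendsto (fun R => c * dilationAverage κ g R) atTop (𝓝 L) := by
  have hc0 : c ≠ 0 := left_ne_zero_of_mul_eq_one hc
  have hsub : (fun R => c * dilationAverage κ (fun x => g x - L) R) =ᶠ[atTop]
      fun R => c * dilationAverage κ g R - L := by
    filter_upwards [eventually_gt_atTop 0] with R hR
    simp only [dilationAverage, mul_sub]
    rw [integral_sub (integrableOn_mul_comp_mul_left hg hC hκ hR) (hκ.mul_const L),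
      integral_mul_const]
    linear_combination -L * hc
  rw [← tendsto_sub_nhds_zero_iff, ← tendsto_congr' hsub]
  exact ⟨fun h => by simpa using h.tendsto.const_mul c,
    fun h => ⟨hκ, by simpa [hc0] using h.const_mul c⁻¹⟩⟩

theorem tendsto_cesaro_iff_isNullKernel (hg : Measurable g) (hC : ∀ x, 0 < x → |g x| ≤ C) :
    Tendsto (fun R => R⁻¹ * ∫ r in Ioc 0 R, g r) atTop (𝓝 L) ↔
      IsNullKernel (fun x => g x - L) cesaroKernel := by
  rw [isNullKernel_sub_const_iff hg hC integrableOn_cesaroKernel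
    (by rw [integral_cesaroKernel, mul_one] : 1 * ∫ x in Ioi 0, cesaroKernel x = 1)]
  refine tendsto_congr' ?_
  filter_upwards [eventually_gt_atTop 0] with R hR
  rw [one_mul, dilationAverage_cesaroKernel g hR]

theorem tendsto_bessel_iff_isNullKernel {a : ℝ} (ha : 1 / 2 ≤ a) {f : ℝ → ℝ}
    (hf : Measurable f) (hC : ∀ r, 0 < r → |r ^ 2 * f r| ≤ C) :
    Tendsto (fun h => h⁻¹ * (π ^ (-(3 : ℝ) / 2) * (Real.Gamma (a + 1 / 2) / Real.Gamma a) *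
        ∫ r in Ioi 0, (1 - Real.Gamma a * besselJ (a - 1) (2 * π * h * r) /
          (π * h * r) ^ (a - 1)) * f r)) (𝓝[>] 0) (𝓝 L) ↔
      IsNullKernel (fun r => r ^ 2 * f r - L) (besselKernel a) := by
  rw [isNullKernel_sub_const_iff (by fun_prop) hC (integrableOn_besselKernel ha)
    (integral_besselKernel ha), ← inv_nhdsGT_zero, ← Filter.map_inv, tendsto_map'_iff]
  refine tendsto_congr' ?_
  filter_upwards [self_mem_nhdsWithin] with h (hh : 0 < h)
  rw [integral_one_sub_besselJ_mul a f hh, Function.comp_apply, mul_left_comm,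
    inv_mul_cancel_left₀ hh.ne']

end Limit

theorem wiener_tauberian_average_general (d : ℝ) (hd : 1 ≤ d) (f : ℝ → ℝ) (hmeas : Measurable f)
    (hbdd : ∃ C : ℝ, ∀ r : ℝ, 0 < r → |r ^ 2 * f r| ≤ C) (L : ℝ) :
    Tendsto (fun R : ℝ => R⁻¹ * ∫ r in Set.Ioc (0 : ℝ) R, r ^ 2 * f r) atTop (𝓝 L) ↔
      Tendsto (fun h : ℝ =>
          h⁻¹ * (Real.pi ^ (-(3 : ℝ) / 2) *
            (Real.Gamma ((d + 1) / 2) / Real.Gamma (d / 2)) *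
            ∫ r in Set.Ioi (0 : ℝ),
              (1 - Real.Gamma (d / 2) * besselJ (d / 2 - 1) (2 * Real.pi * h * r) /
                (Real.pi * h * r) ^ (d / 2 - 1)) * f r))
        (𝓝[>] (0 : ℝ)) (𝓝 L) := by
  obtain ⟨C, hC⟩ := hbdd
  have ha : 1 / 2 ≤ d / 2 := by linarith
  have hφ_bound (r : ℝ) (hr : 0 < r) : |r ^ 2 * f r - L| ≤ C + |L| :=
    (abs_sub _ _).trans (by gcongr; exact hC r hr)
  rw [add_div d 1 2, tendsto_bessel_iff_isNullKernel ha hmeas hC,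
    tendsto_cesaro_iff_isNullKernel (by fun_prop) hC]
  exact isNullKernel_cesaroKernel_iff_besselKernel ha (by fun_prop) hφ_bound

/-- a Wiener-Tauberian lemma: for `f` with `r² f(r)` nonnegative and bounded, the
Cesàro average of `r² f(r)` converges to `L` iff the kernel averages converge to `L`. -/
theorem wiener_tauberian_average (d : ℕ) (hd : 1 ≤ d) (f : ℝ → ℝ)
    (hmeas : Measurable f)
    (hnonneg : ∀ r : ℝ, 0 < r → 0 ≤ r ^ 2 * f r)
    (hbdd : ∃ C : ℝ, ∀ r : ℝ, 0 < r → r ^ 2 * f r ≤ C) :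
    ∀ L : ℝ,
      Tendsto (fun R : ℝ => R⁻¹ * ∫ r in Set.Ioc (0 : ℝ) R, r ^ 2 * f r) atTop (𝓝 L) ↔
        Tendsto (fun h : ℝ =>
            h⁻¹ * (Real.pi ^ (-(3 : ℝ) / 2) *
              (Real.Gamma (((d : ℝ) + 1) / 2) / Real.Gamma ((d : ℝ) / 2)) *
              ∫ r in Set.Ioi (0 : ℝ),
                (1 - Real.Gamma ((d : ℝ) / 2) *
                    besselJ ((d : ℝ) / 2 - 1) (2 * Real.pi * h * r) /
                      (Real.pi * h * r) ^ ((d : ℝ) / 2 - 1)) * f r))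
          (𝓝[>] (0 : ℝ)) (𝓝 L) := by
  obtain ⟨C, hC⟩ := hbdd
  exact wiener_tauberian_average_general d (mod_cast hd) f hmeas
    ⟨C, fun r hr => (abs_of_nonneg (hnonneg r hr)).trans_le (hC r hr)⟩

end
end

section
/- Let d ≥ 1 and let L(u) = π^{−3/2} (Γ((d+1)/2)/Γ(d/2)) (1 − Γ(d/2) · J_{d/2−1}(2πu)/(πu)^{d/2−1}) for u > 0. Then for every real τ the integral K̂₂(τ) = ∫₀^∞ u^{−2+2πiτ} L(u) du converges and equals π^{−2πiτ−1/2}/(1 − 2πiτ) · Γ((d+1)/2) Γ(1/2 + πiτ)/Γ((d+1)/2 − πiτ). -/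
open MeasureTheory Metric Set Real Complex Filter
open scoped FourierTransform RealInnerProductSpace Pointwise ENNReal Topology

noncomputable section

/-- The kernel `L(u)` from the proof of the Tauberian lemma. -/
def kernelL (d : ℕ) (u : ℝ) : ℝ :=
  Real.pi ^ (-(3 : ℝ) / 2) * (Real.Gamma (((d : ℝ) + 1) / 2) / Real.Gamma ((d : ℝ) / 2)) *
    (1 - Real.Gamma ((d : ℝ) / 2) * besselJ ((d : ℝ) / 2 - 1) (2 * Real.pi * u) /
      (Real.pi * u) ^ ((d : ℝ) / 2 - 1))

/-!
Let `Φ_a(y) = y ^ ((1 - a) / 2) J_{a - 1}(2 √y)`. The kernel `L(u)` is a constant multiple of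
`1 - Γ(a) Φ_a(π² u²)` with `a = d / 2`, so the value of `K̂₂` is the Mellin transform `M(p)` of
`1 - Γ(a) Φ_a` in the strip `-1 < Re p < 0`. This function is `O(y)` at `0`, and it is bounded since
`Φ_a² + y Φ_{a+1}²` decreases when `1 / 2 ≤ a`; hence the integral converges absolutely.

For its value, Fubini shows that the Mellin transform at `w` of a Laplace transform is `Γ(w)` times
the Mellin transform at `1 - w` of the original function. The Laplace transform of
`y ^ (a - 1) (1 - Γ(a) Φ_a(y))` is the elementary function `Γ(a) x ^ (-a) (1 - e ^ (-1 / x))`, so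
with `w = a - p` this reads `Γ(a - p) M(p) = -Γ(a) Γ(p)`. The Mellin transform `-Γ(p)` of
`1 - e ^ (-x)` comes from the same principle, `(1 - e ^ (-x)) / x` being the Laplace transform of
the indicator of `(0, 1]`.
-/

section Mellin

variable {F : Type*} [NormedAddCommGroup F] [NormedSpace ℂ F] {f g : ℝ → F} {s : ℂ} {m : F}

lemma hasMellin_congr (hfg : EqOn f g (Ioi 0)) (hf : HasMellin f s m) : HasMellin g s m := by
  have h_eq : EqOn (fun t : ℝ => (t : ℂ) ^ (s - 1) • f t) (fun t => (t : ℂ) ^ (s - 1) • g t)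
      (Ioi 0) := fun t ht => congrArg _ (hfg ht)
  exact ⟨hf.1.congr_fun h_eq measurableSet_Ioi,
    (setIntegral_congr_fun measurableSet_Ioi h_eq).symm.trans hf.2⟩

lemma hasMellin_cpow_smul_iff {a : ℂ} :
    HasMellin (fun t => (t : ℂ) ^ a • f t) s m ↔ HasMellin f (s + a) m := by
  rw [HasMellin, HasMellin, MellinConvergent.cpow_smul, mellin_cpow_smul]

lemma hasMellin_comp_rpow {a : ℝ} (ha : a ≠ 0) (hf : HasMellin f (s / a) m) :
    HasMellin (fun t => f (t ^ a)) s (|a|⁻¹ • m) :=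
  ⟨(MellinConvergent.comp_rpow ha).2 hf.1, by rw [mellin_comp_rpow, hf.2]⟩

lemma hasMellin_comp_inv (hf : HasMellin f (-s) m) : HasMellin (fun t => f t⁻¹) s m := by
  have h := hasMellin_comp_rpow (a := -1) (s := s) (m := m) (by norm_num)
    (by simpa [div_neg] using hf)
  simpa [Real.rpow_neg_one] using h

lemma hasMellin_comp_mul_left {a : ℝ} (ha : 0 < a) (hf : HasMellin f s m) :
    HasMellin (fun t => f (a * t)) s ((a : ℂ) ^ (-s) • m) :=
  ⟨(MellinConvergent.comp_mul_left ha).2 hf.1, by rw [mellin_comp_mul_left f s ha, hf.2]⟩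

lemma hasMellin_smul_left (c : ℂ) (hf : HasMellin f s m) :
    HasMellin (fun t => c • f t) s (c • m) :=
  hf.2 ▸ hasMellin_const_smul hf.1 c

end Mellin

section Laplace

variable {F : Type*} [NormedAddCommGroup F]

/-- The one-sided Laplace transform of `f`, evaluated at a real point. -/
def laplace [NormedSpace ℝ F] (f : ℝ → F) (x : ℝ) : F :=
  ∫ y in Ioi (0 : ℝ), Real.exp (-(x * y)) • f y

lemma laplace_ofReal (f : ℝ → ℝ) (x : ℝ) :
    laplace (fun y => (f y : ℂ)) x = ((laplace f x : ℝ) : ℂ) := by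
  simp only [laplace, ← integral_complex_ofReal, Complex.real_smul, smul_eq_mul,
    Complex.ofReal_mul]

variable [NormedSpace ℂ F]

/-- The integrand, as a function of `(y, x)`, of the double integral
`∫∫ x ^ (w - 1) e ^ (-xy) f y` that computes the Mellin transform at `w` of the Laplace transform
of `f`. -/
def mellinLaplaceIntegrand (f : ℝ → F) (w : ℂ) (z : ℝ × ℝ) : F :=
  (z.2 : ℂ) ^ (w - 1) • Real.exp (-(z.2 * z.1)) • f z.1

lemma aestronglyMeasurable_mellinLaplaceIntegrand {f : ℝ → F}
    (hf : AEStronglyMeasurable f (volume.restrict (Ioi 0))) (w : ℂ) :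
    AEStronglyMeasurable (mellinLaplaceIntegrand f w)
      ((volume.restrict (Ioi 0)).prod (volume.restrict (Ioi 0))) := by
  have h_cpow : Measurable fun z : ℝ × ℝ => (z.2 : ℂ) ^ (w - 1) := by fun_prop
  have h_exp : Measurable fun z : ℝ × ℝ => Real.exp (-(z.2 * z.1)) := by fun_prop
  exact h_cpow.aestronglyMeasurable.smul (h_exp.aestronglyMeasurable.smul hf.comp_fst)

lemma hasMellin_exp_neg_mul {w : ℂ} (hw : 0 < w.re) {y : ℝ} (hy : 0 < y) :
    HasMellin (fun x => (Real.exp (-(x * y)) : ℂ)) w ((y : ℂ) ^ (-w) * Complex.Gamma w) := by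
  have h_conv : MellinConvergent (fun x : ℝ => (Real.exp (-x) : ℂ)) w :=
    (Complex.GammaIntegral_convergent hw).congr_fun (fun x _ => by rw [smul_eq_mul, mul_comm])
      measurableSet_Ioi
  constructor
  · simpa only [mul_comm y] using (MellinConvergent.comp_mul_left hy).2 h_conv
  · rw [mellin_comp_mul_right (fun x => (Real.exp (-x) : ℂ)) w hy, smul_eq_mul,
      ← Complex.GammaIntegral_eq_mellin, Complex.Gamma_eq_integral hw]

lemma integrableOn_mellinLaplaceIntegrand_left (f : ℝ → F) {w : ℂ} (hw : 0 < w.re) {y : ℝ}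
    (hy : 0 < y) : IntegrableOn (fun x => mellinLaplaceIntegrand f w (y, x)) (Ioi 0) := by
  refine IntegrableOn.congr_fun (Integrable.smul_const (hasMellin_exp_neg_mul hw hy).1 (f y))
    (fun x _ => ?_) measurableSet_Ioi
  simp only [mellinLaplaceIntegrand, smul_assoc, Complex.coe_smul]

lemma integral_mellinLaplaceIntegrand_left [CompleteSpace F] (f : ℝ → F) {w : ℂ}
    (hw : 0 < w.re) {y : ℝ} (hy : 0 < y) :
    ∫ x in Ioi (0 : ℝ), mellinLaplaceIntegrand f w (y, x) =
      Complex.Gamma w • (y : ℂ) ^ ((1 - w) - 1) • f y := by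
  have h := (hasMellin_exp_neg_mul hw hy).2
  simp only [mellinLaplaceIntegrand, ← Complex.coe_smul, ← smul_assoc]
  rw [integral_smul_const, ← mellin, h, sub_sub_cancel_left, mul_comm, smul_eq_mul]

lemma integral_norm_mellinLaplaceIntegrand_left (f : ℝ → F) {w : ℂ} (hw : 0 < w.re) {y : ℝ}
    (hy : 0 < y) :
    ∫ x in Ioi (0 : ℝ), ‖mellinLaplaceIntegrand f w (y, x)‖ =
      Real.Gamma w.re * ‖(y : ℂ) ^ ((1 - w) - 1) • f y‖ := by
  have h_norm : EqOn (fun x => ‖mellinLaplaceIntegrand f w (y, x)‖)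
      (fun x => x ^ (w.re - 1) * Real.exp (-(y * x)) * ‖f y‖) (Ioi 0) := fun x hx => by
    simp only [mellinLaplaceIntegrand, norm_smul, Complex.norm_cpow_eq_rpow_re_of_pos hx,
      Complex.sub_re, Complex.one_re, Real.norm_eq_abs, Real.abs_exp, mul_comm y, mul_assoc]
  rw [setIntegral_congr_fun measurableSet_Ioi h_norm, integral_mul_const,
    Real.integral_rpow_mul_exp_neg_mul_Ioi hw hy, norm_smul,
    Complex.norm_cpow_eq_rpow_re_of_pos hy, sub_sub_cancel_left, Complex.neg_re, one_div,
    Real.inv_rpow hy.le, Real.rpow_neg hy.le]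
  ring

lemma aestronglyMeasurable_of_mellinConvergent {f : ℝ → F} {s : ℂ} (hf : MellinConvergent f s) :
    AEStronglyMeasurable f (volume.restrict (Ioi 0)) := by
  have h_inv : Measurable fun y : ℝ => ((y : ℂ) ^ (s - 1))⁻¹ := by fun_prop
  refine (h_inv.aestronglyMeasurable.smul hf.aestronglyMeasurable).congr ?_
  filter_upwards [ae_restrict_mem measurableSet_Ioi] with y hy
  refine inv_smul_smul₀ ?_ (f y)
  rw [Ne, Complex.cpow_eq_zero_iff, Complex.ofReal_eq_zero]
  exact fun h => (mem_Ioi.1 hy).ne' h.1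

lemma integrable_mellinLaplaceIntegrand {f : ℝ → F} {w : ℂ} (hw : 0 < w.re)
    (hf : MellinConvergent f (1 - w)) :
    Integrable (mellinLaplaceIntegrand f w)
      ((volume.restrict (Ioi 0)).prod (volume.restrict (Ioi 0))) := by
  rw [integrable_prod_iff (aestronglyMeasurable_mellinLaplaceIntegrand
    (aestronglyMeasurable_of_mellinConvergent hf) w)]
  constructor
  · filter_upwards [ae_restrict_mem measurableSet_Ioi] with y hy
    exact integrableOn_mellinLaplaceIntegrand_left f hw hy
  · refine (hf.norm.const_mul (Real.Gamma w.re)).congr ?_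
    filter_upwards [ae_restrict_mem measurableSet_Ioi] with y hy
    exact (integral_norm_mellinLaplaceIntegrand_left f hw hy).symm

theorem hasMellin_laplace [CompleteSpace F] {f : ℝ → F} {w : ℂ} (hw : 0 < w.re)
    (hf : MellinConvergent f (1 - w)) :
    HasMellin (laplace f) w (Complex.Gamma w • mellin f (1 - w)) := by
  have h_int := integrable_mellinLaplaceIntegrand hw hf
  have h_inner : ∀ x : ℝ, ∫ y in Ioi (0 : ℝ), mellinLaplaceIntegrand f w (y, x) =
      (x : ℂ) ^ (w - 1) • laplace f x := fun x => by
    simp only [mellinLaplaceIntegrand, integral_smul, laplace]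
  constructor
  · exact h_int.integral_prod_right.congr (Eventually.of_forall h_inner)
  · calc mellin (laplace f) w
        = ∫ x in Ioi (0 : ℝ), ∫ y in Ioi (0 : ℝ), mellinLaplaceIntegrand f w (y, x) := by
          simp only [h_inner, mellin]
      _ = ∫ y in Ioi (0 : ℝ), ∫ x in Ioi (0 : ℝ), mellinLaplaceIntegrand f w (y, x) :=
          (integral_integral_swap (f := fun y x => mellinLaplaceIntegrand f w (y, x)) h_int).symm
      _ = ∫ y in Ioi (0 : ℝ), Complex.Gamma w • (y : ℂ) ^ ((1 - w) - 1) • f y :=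
          setIntegral_congr_fun measurableSet_Ioi fun y hy =>
            integral_mellinLaplaceIntegrand_left f hw hy
      _ = Complex.Gamma w • mellin f (1 - w) := integral_smul _ _

end Laplace

lemma laplace_indicator_Ioc_one {x : ℝ} (hx : x ≠ 0) :
    laplace (indicator (Ioc 0 1) fun _ => (1 : ℂ)) x =
      (x : ℂ) ^ (-1 : ℂ) • (1 - Real.exp (-x) : ℂ) := by
  have h_ind : ∀ y, Real.exp (-(x * y)) • indicator (Ioc 0 1) (fun _ => (1 : ℂ)) y =
      indicator (Ioc 0 1) (fun y : ℝ => Complex.exp (-x * y)) y := fun y => by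
    simp only [indicator_apply]
    split_ifs <;> simp
  have hx' : (x : ℂ) ≠ 0 := Complex.ofReal_ne_zero.2 hx
  simp only [laplace, h_ind]
  rw [setIntegral_indicator measurableSet_Ioc, inter_eq_self_of_subset_right Ioc_subset_Ioi_self,
    ← intervalIntegral.integral_of_le zero_le_one, integral_exp_mul_complex (neg_ne_zero.2 hx'),
    Complex.cpow_neg_one, smul_eq_mul]
  push_cast
  field_simp
  simp

lemma hasMellin_one_sub_exp_neg {p : ℂ} (hp : -1 < p.re) (hp' : p.re < 0) :
    HasMellin (fun x => (1 - Real.exp (-x) : ℂ)) p (-Complex.Gamma p) := by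
  have hp0 : p ≠ 0 := fun h => by simp [h] at hp'
  have h_one := hasMellin_one_Ioc (s := 1 - (p + 1)) (by simpa using hp')
  have h := hasMellin_laplace (w := p + 1) (by simpa using neg_lt_iff_pos_add.1 hp) h_one.1
  rw [h_one.2] at h
  have h_shift := hasMellin_cpow_smul_iff.1
    (hasMellin_congr (fun x hx => laplace_indicator_Ioc_one (ne_of_gt hx)) h)
  convert h_shift using 1
  · ring
  · rw [Complex.Gamma_add_one p hp0, smul_eq_mul, show 1 - (p + 1) = -p by ring]
    field_simp

section BesselClifford

/-- The `k`-th term of the power series of `besselClifford a` at `x`. -/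
def besselCliffordTerm (a : ℝ) (k : ℕ) (x : ℝ) : ℝ :=
  (-x) ^ k / (k.factorial * Real.Gamma (a + k))

/-- The Bessel–Clifford function `∑ (-x) ^ k / (k! Γ(a + k))`, i.e. the regularized hypergeometric
function `₀F₁(; a; -x) / Γ(a)`. It is entire, and equals `x ^ ((1 - a) / 2) J_{a - 1}(2 √x)` for
`0 < x`. At a pole of `Γ`, Lean's `Γ = 0` and `1 / 0 = 0` give the correct zero coefficient. -/
def besselClifford (a x : ℝ) : ℝ := ∑' k, besselCliffordTerm a k x

lemma inv_Gamma_eq_mul_inv_Gamma_add_one (s : ℝ) :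
    (Real.Gamma s)⁻¹ = s * (Real.Gamma (s + 1))⁻¹ := by
  rcases eq_or_ne s 0 with rfl | hs
  · simp [Real.Gamma_zero]
  · rw [Real.Gamma_add_one hs, mul_inv, mul_inv_cancel_left₀ hs]

lemma besselCliffordTerm_zero (a x : ℝ) : besselCliffordTerm a 0 x = (Real.Gamma a)⁻¹ := by
  simp [besselCliffordTerm]

lemma mul_besselCliffordTerm_succ (a : ℝ) (k : ℕ) (x : ℝ) :
    (k + 1) * besselCliffordTerm a (k + 1) x = -x * besselCliffordTerm (a + 1) k x := by
  rw [besselCliffordTerm, besselCliffordTerm, Nat.factorial_succ, pow_succ]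
  push_cast
  rw [show a + 1 + (k : ℝ) = a + (k + 1) by ring]
  field_simp

lemma besselCliffordTerm_eq_add_mul (a : ℝ) (k : ℕ) (x : ℝ) :
    besselCliffordTerm a k x = (a + k) * besselCliffordTerm (a + 1) k x := by
  simp only [besselCliffordTerm, div_eq_mul_inv, mul_inv]
  rw [inv_Gamma_eq_mul_inv_Gamma_add_one, add_right_comm a 1]
  ring

lemma summable_besselCliffordTerm (a x : ℝ) : Summable fun k => besselCliffordTerm a k x := by
  refine summable_of_ratio_norm_eventually_le (r := 1 / 2) (by norm_num) ?_
  filter_upwards [eventually_ge_atTop ⌈2 * |x| + 1⌉₊, eventually_ge_atTop ⌈1 - a⌉₊] with k hk hk'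
  have hk : 2 * |x| + 1 ≤ k := Nat.ceil_le.1 hk
  have hk' : 1 - a ≤ k := Nat.ceil_le.1 hk'
  have h_succ : (k + 1) * (a + k) * besselCliffordTerm a (k + 1) x =
      -x * besselCliffordTerm a k x := by
    rw [besselCliffordTerm_eq_add_mul a k, mul_right_comm, mul_besselCliffordTerm_succ]
    ring
  have h_norm : (k + 1) * (a + k) * ‖besselCliffordTerm a (k + 1) x‖ =
      |x| * ‖besselCliffordTerm a k x‖ := by
    have h_nonneg : 0 ≤ (k + 1) * (a + k) := mul_nonneg (by positivity) (by linarith)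
    rw [← abs_neg x, ← Real.norm_eq_abs, ← norm_mul, ← h_succ,
      norm_mul _ (besselCliffordTerm _ _ _), Real.norm_of_nonneg h_nonneg]
  have h_coeff : 2 * |x| + 1 ≤ (k + 1) * (a + k) := by nlinarith [abs_nonneg x]
  refine le_of_mul_le_mul_left (h_norm.trans_le ?_) (lt_of_lt_of_le (by positivity) h_coeff)
  nlinarith [norm_nonneg (besselCliffordTerm a k x)]

lemma hasDerivAt_besselCliffordTerm_succ (a : ℝ) (k : ℕ) (x : ℝ) :
    HasDerivAt (besselCliffordTerm a (k + 1)) (-besselCliffordTerm (a + 1) k x) x := by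
  have h := ((hasDerivAt_neg x).pow (k + 1)).div_const
    ((k + 1).factorial * Real.Gamma (a + (k + 1 : ℕ)))
  refine h.congr_deriv ?_
  simp only [besselCliffordTerm, Nat.factorial_succ, add_tsub_cancel_right, Nat.cast_mul,
    Nat.cast_add_one, add_right_comm a 1, ← add_assoc]
  field_simp

lemma norm_besselCliffordTerm_le {a R x : ℝ} (hx : |x| ≤ R) (k : ℕ) :
    ‖besselCliffordTerm a k x‖ ≤ ‖besselCliffordTerm a k R‖ := by
  simp only [besselCliffordTerm, norm_div, norm_pow, norm_neg, Real.norm_eq_abs]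
  gcongr ?_ ^ k / _
  exact hx.trans (le_abs_self R)

lemma besselClifford_eq_inv_Gamma_add (a x : ℝ) :
    besselClifford a x = (Real.Gamma a)⁻¹ + ∑' k, besselCliffordTerm a (k + 1) x := by
  rw [besselClifford, (summable_besselCliffordTerm a x).tsum_eq_zero_add, besselCliffordTerm_zero]

lemma besselClifford_zero (a : ℝ) : besselClifford a 0 = (Real.Gamma a)⁻¹ := by
  simp [besselClifford_eq_inv_Gamma_add, besselCliffordTerm]

theorem hasDerivAt_besselClifford (a x : ℝ) :
    HasDerivAt (besselClifford a) (-besselClifford (a + 1) x) x := by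
  have h_summable := (summable_besselCliffordTerm (a + 1) (|x| + 1)).norm
  have hx : x ∈ ball (0 : ℝ) (|x| + 1) := by simp
  have h_tail : HasDerivAt (fun x => ∑' k, besselCliffordTerm a (k + 1) x)
      (∑' k, -besselCliffordTerm (a + 1) k x) x :=
    hasDerivAt_tsum_of_isPreconnected h_summable isOpen_ball (convex_ball 0 _).isPreconnected
      (fun k y _ => hasDerivAt_besselCliffordTerm_succ a k y)
      (fun k y hy =>
        (norm_neg _).trans_le (norm_besselCliffordTerm_le (mem_ball_zero_iff.1 hy).le k))
      hx ((summable_nat_add_iff 1).2 (summable_besselCliffordTerm a x)) hx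
  rw [tsum_neg] at h_tail
  rw [funext (besselClifford_eq_inv_Gamma_add a)]
  exact h_tail.const_add _

lemma continuous_besselClifford (a : ℝ) : Continuous (besselClifford a) :=
  continuous_iff_continuousAt.2 fun x => (hasDerivAt_besselClifford a x).continuousAt

lemma besselClifford_recurrence (a x : ℝ) :
    besselClifford a x = a * besselClifford (a + 1) x - x * besselClifford (a + 2) x := by
  have h_succ : ∀ k : ℕ, besselCliffordTerm a (k + 1) x =
      a * besselCliffordTerm (a + 1) (k + 1) x - x * besselCliffordTerm (a + 2) k x := fun k => by
    have h := mul_besselCliffordTerm_succ (a + 1) k x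
    rw [show a + 1 + 1 = a + 2 by ring] at h
    rw [besselCliffordTerm_eq_add_mul a]
    push_cast
    linear_combination h
  have h₁ := (summable_nat_add_iff 1).2 (summable_besselCliffordTerm (a + 1) x)
  rw [besselClifford_eq_inv_Gamma_add a, besselClifford_eq_inv_Gamma_add (a + 1), tsum_congr h_succ,
    (h₁.mul_left a).tsum_sub ((summable_besselCliffordTerm (a + 2) x).mul_left x), tsum_mul_left,
    tsum_mul_left, inv_Gamma_eq_mul_inv_Gamma_add_one, ← besselClifford]
  ring

-- An energy for the second-order equation `y Φ'' + a Φ' + Φ = 0` satisfied by `besselClifford a`.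
lemma antitone_besselClifford_energy {a : ℝ} (ha : 1 / 2 ≤ a) :
    Antitone fun x => besselClifford a x ^ 2 + x * besselClifford (a + 1) x ^ 2 := by
  have h_deriv : ∀ x, HasDerivAt
      (fun x => besselClifford a x ^ 2 + x * besselClifford (a + 1) x ^ 2)
      ((1 - 2 * a) * besselClifford (a + 1) x ^ 2) x := fun x => by
    have h₁ := hasDerivAt_besselClifford a x
    have h₂ := hasDerivAt_besselClifford (a + 1) x
    refine ((h₁.fun_pow 2).fun_add ((hasDerivAt_id' x).fun_mul (h₂.fun_pow 2))).congr_deriv ?_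
    rw [besselClifford_recurrence a, show a + 1 + 1 = a + 2 by ring]
    ring
  exact antitone_of_hasDerivAt_nonpos h_deriv fun x =>
    mul_nonpos_of_nonpos_of_nonneg (by linarith) (sq_nonneg _)

theorem abs_Gamma_mul_besselClifford_le_one {a x : ℝ} (ha : 1 / 2 ≤ a) (hx : 0 ≤ x) :
    |Real.Gamma a * besselClifford a x| ≤ 1 := by
  have hΓ : 0 < Real.Gamma a := Real.Gamma_pos_of_pos (by linarith)
  have h_energy : besselClifford a x ^ 2 + x * besselClifford (a + 1) x ^ 2 ≤
      (Real.Gamma a)⁻¹ ^ 2 := by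
    simpa [besselClifford_zero] using antitone_besselClifford_energy ha hx
  have h_abs : |besselClifford a x| ≤ (Real.Gamma a)⁻¹ :=
    abs_le_of_sq_le_sq (by nlinarith [sq_nonneg (besselClifford (a + 1) x)]) (by positivity)
  rwa [abs_mul, abs_of_pos hΓ, ← le_inv_mul_iff₀ hΓ, mul_one]

lemma besselJ_two_mul_s5 (ν : ℝ) {v : ℝ} (hv : 0 < v) :
    besselJ ν (2 * v) = v ^ ν * besselClifford (ν + 1) (v ^ 2) := by
  rw [besselJ, besselClifford, ← tsum_mul_left]
  refine tsum_congr fun k => ?_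
  rw [besselCliffordTerm, mul_div_cancel_left₀ v two_ne_zero, Real.rpow_add hv,
    neg_pow (v ^ 2), ← pow_mul, ← Nat.cast_ofNat, ← Nat.cast_mul, Real.rpow_natCast,
    add_right_comm ν]
  ring

lemma integrableOn_exp_neg_mul_rpow {a x : ℝ} (ha : 0 < a) (hx : 0 < x) :
    IntegrableOn (fun y => Real.exp (-(x * y)) * y ^ (a - 1)) (Ioi 0) := by
  simpa only [Real.rpow_one, neg_mul, mul_comm (Real.exp _)] using
    integrableOn_rpow_mul_exp_neg_mul_rpow (s := a - 1) (p := 1) (by linarith) one_pos hx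

lemma laplace_rpow {a x : ℝ} (ha : 0 < a) (hx : 0 < x) :
    laplace (fun y => y ^ (a - 1)) x = (1 / x) ^ a * Real.Gamma a := by
  simp only [laplace, smul_eq_mul, mul_comm (Real.exp _)]
  exact Real.integral_rpow_mul_exp_neg_mul_Ioi ha hx

lemma rpow_mul_besselCliffordTerm (a : ℝ) (k : ℕ) {y : ℝ} (hy : 0 < y) :
    y ^ (a - 1) * besselCliffordTerm a k y =
      (-1) ^ k / (k.factorial * Real.Gamma (a + k)) * y ^ (a + k - 1) := by
  rw [besselCliffordTerm, neg_pow, add_sub_right_comm, Real.rpow_add hy, Real.rpow_natCast]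
  ring

lemma norm_besselCliffordTerm {a x : ℝ} (ha : 0 < a) (k : ℕ) (hx : 0 ≤ x) :
    ‖besselCliffordTerm a k x‖ = (-1) ^ k * besselCliffordTerm a k x := by
  rw [besselCliffordTerm, norm_div, norm_pow, norm_neg, Real.norm_of_nonneg hx,
    Real.norm_of_nonneg (by positivity : 0 ≤ k.factorial * Real.Gamma (a + k)), mul_div_assoc',
    ← mul_pow, neg_one_mul, neg_neg]

lemma integrableOn_exp_neg_mul_rpow_mul_besselCliffordTerm {a x : ℝ} (ha : 0 < a) (hx : 0 < x)
    (k : ℕ) :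
    IntegrableOn (fun y => Real.exp (-(x * y)) • (y ^ (a - 1) * besselCliffordTerm a k y))
      (Ioi 0) := by
  refine IntegrableOn.congr_fun
    ((integrableOn_exp_neg_mul_rpow (a := a + k) (by positivity) hx).const_mul
      ((-1) ^ k / (k.factorial * Real.Gamma (a + k)))) (fun y hy => ?_) measurableSet_Ioi
  rw [rpow_mul_besselCliffordTerm a k hy, smul_eq_mul, mul_left_comm]

lemma laplace_rpow_mul_besselCliffordTerm {a x : ℝ} (ha : 0 < a) (hx : 0 < x) (k : ℕ) :
    laplace (fun y => y ^ (a - 1) * besselCliffordTerm a k y) x =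
      (1 / x) ^ a * ((-(1 / x)) ^ k / k.factorial) := by
  have hak : 0 < a + k := by positivity
  have hΓ := (Real.Gamma_pos_of_pos hak).ne'
  calc laplace (fun y => y ^ (a - 1) * besselCliffordTerm a k y) x
      = (-1) ^ k / (k.factorial * Real.Gamma (a + k)) * laplace (fun y => y ^ (a + k - 1)) x := by
        rw [laplace, laplace, ← integral_const_mul]
        refine setIntegral_congr_fun measurableSet_Ioi fun y hy => ?_
        simp only [rpow_mul_besselCliffordTerm a k hy, smul_eq_mul, mul_left_comm]
    _ = (1 / x) ^ a * ((-(1 / x)) ^ k / k.factorial) := by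
        rw [laplace_rpow hak hx, Real.rpow_add (by positivity), Real.rpow_natCast, neg_pow (1 / x)]
        field_simp

lemma integral_norm_exp_neg_mul_rpow_mul_besselCliffordTerm {a x : ℝ} (ha : 0 < a) (hx : 0 < x)
    (k : ℕ) :
    ∫ y in Ioi 0, ‖Real.exp (-(x * y)) • (y ^ (a - 1) * besselCliffordTerm a k y)‖ =
      (1 / x) ^ a * ((1 / x) ^ k / k.factorial) := by
  calc ∫ y in Ioi 0, ‖Real.exp (-(x * y)) • (y ^ (a - 1) * besselCliffordTerm a k y)‖
      = (-1) ^ k * laplace (fun y => y ^ (a - 1) * besselCliffordTerm a k y) x := by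
        rw [laplace, ← integral_const_mul]
        refine setIntegral_congr_fun measurableSet_Ioi fun y hy => ?_
        have hy' : 0 ≤ y ^ (a - 1) := Real.rpow_nonneg (le_of_lt hy) _
        simp only [norm_mul, norm_besselCliffordTerm ha k (le_of_lt hy),
          Real.norm_of_nonneg hy', Real.norm_of_nonneg (Real.exp_pos _).le, smul_eq_mul]
        ring
    _ = (1 / x) ^ a * ((1 / x) ^ k / k.factorial) := by
        rw [laplace_rpow_mul_besselCliffordTerm ha hx, mul_left_comm, mul_div_assoc', ← mul_pow,
          neg_one_mul, neg_neg]

theorem laplace_rpow_mul_besselClifford {a x : ℝ} (ha : 0 < a) (hx : 0 < x) :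
    laplace (fun y => y ^ (a - 1) * besselClifford a y) x = (1 / x) ^ a * Real.exp (-(1 / x)) := by
  have h_summable : Summable fun k =>
      ∫ y in Ioi 0, ‖Real.exp (-(x * y)) • (y ^ (a - 1) * besselCliffordTerm a k y)‖ := by
    simp only [integral_norm_exp_neg_mul_rpow_mul_besselCliffordTerm ha hx]
    exact (Real.summable_pow_div_factorial (1 / x)).mul_left _
  calc laplace (fun y => y ^ (a - 1) * besselClifford a y) x
      = ∫ y in Ioi 0, ∑' k, Real.exp (-(x * y)) • (y ^ (a - 1) * besselCliffordTerm a k y) := by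
        simp only [laplace, besselClifford, smul_eq_mul, tsum_mul_left]
    _ = ∑' k, laplace (fun y => y ^ (a - 1) * besselCliffordTerm a k y) x :=
        (integral_tsum_of_summable_integral_norm
          (integrableOn_exp_neg_mul_rpow_mul_besselCliffordTerm ha hx) h_summable).symm
    _ = (1 / x) ^ a * Real.exp (-(1 / x)) := by
        simp only [laplace_rpow_mul_besselCliffordTerm ha hx, tsum_mul_left]
        rw [Real.exp_eq_exp_ℝ, NormedSpace.exp_eq_tsum_div]

theorem laplace_rpow_mul_one_sub_besselClifford {a x : ℝ} (ha : 1 / 2 ≤ a) (hx : 0 < x) :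
    laplace (fun y => y ^ (a - 1) * (1 - Real.Gamma a * besselClifford a y)) x =
      Real.Gamma a * ((1 / x) ^ a * (1 - Real.exp (-(1 / x)))) := by
  have ha' : 0 < a := by linarith
  have h_int := integrableOn_exp_neg_mul_rpow ha' hx
  have h_bound : ∀ᵐ y ∂volume.restrict (Ioi 0), ‖Real.Gamma a * besselClifford a y‖ ≤ 1 := by
    filter_upwards [ae_restrict_mem measurableSet_Ioi] with y hy
    exact abs_Gamma_mul_besselClifford_le_one ha (le_of_lt hy)
  have h_cont : Continuous fun y => Real.Gamma a * besselClifford a y :=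
    continuous_const.mul (continuous_besselClifford a)
  have h_int' := Integrable.mul_bdd h_int h_cont.aestronglyMeasurable h_bound
  calc laplace (fun y => y ^ (a - 1) * (1 - Real.Gamma a * besselClifford a y)) x
      = ∫ y in Ioi 0, (Real.exp (-(x * y)) * y ^ (a - 1) -
          Real.exp (-(x * y)) * y ^ (a - 1) * (Real.Gamma a * besselClifford a y)) := by
        simp only [laplace, smul_eq_mul, mul_sub, mul_one, mul_assoc]
    _ = laplace (fun y => y ^ (a - 1)) x -
          Real.Gamma a * laplace (fun y => y ^ (a - 1) * besselClifford a y) x := by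
        rw [integral_sub h_int h_int', laplace, laplace, ← integral_const_mul]
        simp only [smul_eq_mul, mul_assoc, mul_left_comm]
    _ = Real.Gamma a * ((1 / x) ^ a * (1 - Real.exp (-(1 / x)))) := by
        rw [laplace_rpow ha' hx, laplace_rpow_mul_besselClifford ha' hx]
        ring

lemma mellinConvergent_one_sub_besselClifford {a : ℝ} (ha : 1 / 2 ≤ a) {p : ℂ} (hp : -1 < p.re)
    (hp' : p.re < 0) :
    MellinConvergent (fun y => ((1 - Real.Gamma a * besselClifford a y : ℝ) : ℂ)) p := by
  have h_cont : Continuous fun y => 1 - Real.Gamma a * besselClifford a y :=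
    continuous_const.sub (continuous_const.mul (continuous_besselClifford a))
  have h_zero : 1 - Real.Gamma a * besselClifford a 0 = 0 := by
    rw [besselClifford_zero, mul_inv_cancel₀ (Real.Gamma_pos_of_pos (by linarith)).ne', sub_self]
  refine mellinConvergent_of_isBigO_rpow (a := 0) (b := -1)
    ((Complex.continuous_ofReal.comp h_cont).locallyIntegrable.locallyIntegrableOn _) ?_ hp' ?_ hp
  · refine Complex.isBigO_ofReal_left.2 (Asymptotics.IsBigO.of_bound 2 ?_)
    filter_upwards [eventually_ge_atTop 0] with y hy
    have h := abs_le.1 (abs_Gamma_mul_besselClifford_le_one ha hy)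
    rw [neg_zero, Real.rpow_zero, norm_one, mul_one, Real.norm_eq_abs, abs_le]
    constructor <;> linarith
  · have h_deriv := ((hasDerivAt_besselClifford a 0).const_mul (Real.Gamma a)).const_sub 1
    refine Complex.isBigO_ofReal_left.2 ?_
    simpa [h_zero] using (h_deriv.isBigO_sub).mono nhdsWithin_le_nhds

lemma laplace_cpow_smul_one_sub_besselClifford {a x : ℝ} (ha : 1 / 2 ≤ a) (hx : 0 < x) :
    laplace (fun y => (y : ℂ) ^ (a - 1 : ℂ) • ((1 - Real.Gamma a * besselClifford a y : ℝ) : ℂ)) x =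
      Complex.Gamma a • (x : ℂ) ^ (-a : ℂ) • (1 - Real.exp (-x⁻¹) : ℂ) := by
  calc laplace (fun y => (y : ℂ) ^ (a - 1 : ℂ) •
        ((1 - Real.Gamma a * besselClifford a y : ℝ) : ℂ)) x
      = laplace (fun y =>
          ((y ^ (a - 1) * (1 - Real.Gamma a * besselClifford a y) : ℝ) : ℂ)) x := by
        refine setIntegral_congr_fun measurableSet_Ioi fun y hy => ?_
        simp only [Complex.ofReal_mul _ (1 - _), Complex.ofReal_cpow (le_of_lt hy), smul_eq_mul,
          Complex.ofReal_sub a, Complex.ofReal_one]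
    _ = ((Real.Gamma a * (x ^ (-a) * (1 - Real.exp (-x⁻¹))) : ℝ) : ℂ) := by
        rw [laplace_ofReal, laplace_rpow_mul_one_sub_besselClifford ha hx, one_div,
          Real.inv_rpow hx.le, Real.rpow_neg hx.le]
    _ = Complex.Gamma a • (x : ℂ) ^ (-a : ℂ) • (1 - Real.exp (-x⁻¹) : ℂ) := by
        rw [Complex.Gamma_ofReal, ← Complex.ofReal_neg a, ← Complex.ofReal_cpow hx.le]
        push_cast
        rfl

theorem hasMellin_one_sub_besselClifford {a : ℝ} (ha : 1 / 2 ≤ a) {p : ℂ} (hp : -1 < p.re)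
    (hp' : p.re < 0) :
    HasMellin (fun y => ((1 - Real.Gamma a * besselClifford a y : ℝ) : ℂ)) p
      (-(Complex.Gamma a * Complex.Gamma p) / Complex.Gamma (a - p)) := by
  have h_re : 0 < (a - p : ℂ).re := by simp only [Complex.sub_re, Complex.ofReal_re]; linarith
  have h_inv : HasMellin (fun x => (1 - Real.exp (-x⁻¹) : ℂ)) (a - p + -a) (-Complex.Gamma p) :=
    hasMellin_comp_inv <| by
      rw [show -((a : ℂ) - p + -a) = p by ring]
      exact hasMellin_one_sub_exp_neg hp hp'
  have h_laplace := hasMellin_congr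
    (fun x hx => (laplace_cpow_smul_one_sub_besselClifford ha hx).symm)
    (hasMellin_smul_left (Complex.Gamma a) (hasMellin_cpow_smul_iff.2 h_inv))
  have h_conv := mellinConvergent_one_sub_besselClifford ha hp hp'
  have h_exponent : p = 1 - (a - p) + (a - 1) := by ring
  have h := (hasMellin_laplace h_re
    (MellinConvergent.cpow_smul.2 (h_exponent ▸ h_conv))).2.symm.trans h_laplace.2
  refine ⟨h_conv, ?_⟩
  rw [mellin_cpow_smul, ← h_exponent, smul_eq_mul, smul_eq_mul] at h
  rw [eq_div_iff (Complex.Gamma_ne_zero_of_re_pos h_re), mul_comm, h, mul_neg]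

end BesselClifford

theorem hasMellin_one_sub_besselJ {ν : ℝ} (hν : -(1 / 2) ≤ ν) {s : ℂ} (hs : -2 < s.re)
    (hs' : s.re < 0) :
    HasMellin (fun v => ((1 - Real.Gamma (ν + 1) * besselJ ν (2 * v) / v ^ ν : ℝ) : ℂ)) s
      (-(Complex.Gamma (ν + 1) * Complex.Gamma (s / 2)) / (2 * Complex.Gamma (ν + 1 - s / 2))) := by
  have h := hasMellin_comp_rpow (s := s) two_ne_zero <|
    hasMellin_one_sub_besselClifford (a := ν + 1) (p := s / (2 : ℝ)) (by linarith)
      (by rw [Complex.div_ofReal_re]; linarith) (by rw [Complex.div_ofReal_re]; linarith)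
  convert hasMellin_congr (fun v hv => ?_) h using 1
  · push_cast
    rw [abs_of_pos two_pos, Complex.real_smul]
    push_cast
    field_simp
  · have hv' : v ^ ν ≠ 0 := (Real.rpow_pos_of_pos hv ν).ne'
    simp only [besselJ_two_mul_s5 ν hv, Real.rpow_two]
    field_simp

theorem hasMellin_kernelL {d : ℕ} (hd : 1 ≤ d) {s : ℂ} (hs : -2 < s.re) (hs' : s.re < 0) :
    HasMellin (fun u => (kernelL d u : ℂ)) s
      (-((Real.pi : ℂ) ^ (-s - 3 / 2) * Complex.Gamma (((d : ℂ) + 1) / 2) *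
        Complex.Gamma (s / 2)) / (2 * Complex.Gamma ((d - s) / 2))) := by
  have hd' : (1 : ℝ) ≤ d := Nat.one_le_cast.2 hd
  have hπ : (Real.pi : ℂ) ≠ 0 := Complex.ofReal_ne_zero.2 Real.pi_ne_zero
  have hΓ : Complex.Gamma ((d : ℂ) / 2) ≠ 0 := Complex.Gamma_ne_zero_of_re_pos <| by
    rw [Complex.div_ofNat_re, Complex.natCast_re]
    linarith
  have h := hasMellin_smul_left
    ((Real.pi ^ (-(3 : ℝ) / 2) * (Real.Gamma (((d : ℝ) + 1) / 2) / Real.Gamma ((d : ℝ) / 2)) :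
      ℝ) : ℂ)
    (hasMellin_comp_mul_left Real.pi_pos
      (hasMellin_one_sub_besselJ (ν := (d : ℝ) / 2 - 1) (by linarith) hs hs'))
  convert h using 1
  · ext u
    rw [kernelL, sub_add_cancel, mul_assoc 2 Real.pi u, smul_eq_mul, ← Complex.ofReal_mul]
  · rw [sub_eq_add_neg (-s), Complex.cpow_add _ _ hπ]
    push_cast [Complex.ofReal_cpow Real.pi_pos.le, ← Complex.Gamma_ofReal]
    rw [sub_add_cancel, neg_div (2 : ℂ) 3, smul_eq_mul, smul_eq_mul, ← sub_div]
    field_simp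

theorem K2hat_value_general (d : ℕ) (hd : 1 ≤ d) (τ : ℂ) (hτ : |τ.im| < 1 / (2 * Real.pi)) :
    IntegrableOn
      (fun u : ℝ => (u : ℂ) ^ ((-2 : ℂ) + 2 * Real.pi * Complex.I * τ) * (kernelL d u : ℂ))
      (Set.Ioi (0 : ℝ)) ∧
    ∫ u in Set.Ioi (0 : ℝ),
        (u : ℂ) ^ ((-2 : ℂ) + 2 * Real.pi * Complex.I * τ) * (kernelL d u : ℂ) =
      (Real.pi : ℂ) ^ (-(2 * Real.pi * Complex.I * τ) - 1 / 2) / (1 - 2 * Real.pi * Complex.I * τ) *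
        (Complex.Gamma (((d : ℂ) + 1) / 2) * Complex.Gamma (1 / 2 + Real.pi * Complex.I * τ) /
          Complex.Gamma (((d : ℂ) + 1) / 2 - Real.pi * Complex.I * τ)) := by
  set s : ℂ := 2 * Real.pi * Complex.I * τ - 1 with hs_def
  have hs_re : s.re = -(2 * Real.pi * τ.im) - 1 := by simp [hs_def, mul_assoc]
  have h_im : |2 * Real.pi * τ.im| < 1 := by
    rwa [abs_mul, abs_of_pos Real.two_pi_pos, mul_comm, ← lt_div_iff₀ Real.two_pi_pos]
  obtain ⟨h_lower, h_upper⟩ := abs_lt.1 h_im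
  have hs0 : s ≠ 0 := fun h => by rw [h, Complex.zero_re] at hs_re; linarith
  have hs1 : 1 - 2 * Real.pi * Complex.I * τ = -s := by rw [hs_def]; ring
  have h := hasMellin_kernelL hd (s := s) (by linarith) (by linarith)
  rw [show (-2 : ℂ) + 2 * Real.pi * Complex.I * τ = s - 1 by rw [hs_def]; ring]
  refine ⟨h.1, h.2.trans ?_⟩
  rw [hs1, show 1 / 2 + Real.pi * Complex.I * τ = s / 2 + 1 by rw [hs_def]; ring,
    show ((d : ℂ) + 1) / 2 - Real.pi * Complex.I * τ = (d - s) / 2 by rw [hs_def]; ring,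
    show -(2 * Real.pi * Complex.I * τ) - 1 / 2 = -s - 3 / 2 by rw [hs_def]; ring,
    Complex.Gamma_add_one _ (div_ne_zero hs0 two_ne_zero)]
  field_simp

/-- the Mellin-type integral `K̂₂(τ) = ∫₀^∞ u^{-2+2πiτ} L(u) du` converges and
has the stated Gamma-function value. -/
theorem K2hat_value (d : ℕ) (hd : 1 ≤ d) (τ : ℝ) :
    IntegrableOn
      (fun u : ℝ => (u : ℂ) ^ ((-2 : ℂ) + 2 * Real.pi * Complex.I * τ) * (kernelL d u : ℂ))
      (Set.Ioi (0 : ℝ)) ∧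
    ∫ u in Set.Ioi (0 : ℝ),
        (u : ℂ) ^ ((-2 : ℂ) + 2 * Real.pi * Complex.I * τ) * (kernelL d u : ℂ) =
      (Real.pi : ℂ) ^ (-(2 * Real.pi * Complex.I * τ) - 1 / 2) / (1 - 2 * Real.pi * Complex.I * τ) *
        (Complex.Gamma (((d : ℂ) + 1) / 2) * Complex.Gamma (1 / 2 + Real.pi * Complex.I * τ) /
          Complex.Gamma (((d : ℂ) + 1) / 2 - Real.pi * Complex.I * τ)) :=
  K2hat_value_general d hd τ (by rw [Complex.ofReal_im, abs_zero]; positivity)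

end
end

section
/- Let d ≥ 1 and let L(u) = π^{−3/2} (Γ((d+1)/2)/Γ(d/2)) (1 − Γ(d/2) · J_{d/2−1}(2πu)/(πu)^{d/2−1}) for u > 0, and K̂₂(τ) = ∫₀^∞ u^{−2+2πiτ} L(u) du for τ ∈ ℝ. Then K̂₂(0) = 1 and K̂₂(τ) ≠ 0 for every real τ. -/
open MeasureTheory Metric Set Real Complex Filter
open scoped FourierTransform RealInnerProductSpace Pointwise ENNReal Topology

noncomputable section

/-- `K̂₂(τ) = ∫₀^∞ u^{-2+2πiτ} L(u) du`. -/
def K2hat (d : ℕ) (τ : ℝ) : ℂ :=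
  ∫ u in Set.Ioi (0 : ℝ),
    (u : ℂ) ^ ((-2 : ℂ) + 2 * Real.pi * Complex.I * τ) * (kernelL d u : ℂ)

/-!
Up to a power of its argument, `J_{b-1}(2√w)` is `₀F̃₁(; b; -w)`, and the Laplace transform of
`w^{b-1} ₀F̃₁(; b; -w)` is `x^{-b} e^{-1/x}`; so that of `w^{b-1} (1 - Γ(b) ₀F̃₁(; b; -w))` is
`Γ(b) x^{-b} (1 - e^{-1/x})`. Since a Laplace transform turns a Mellin transform into its
reflection multiplied by a Gamma factor, the Mellin transform at `σ` of `1 - Γ(b) ₀F̃₁(; b; -w)`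
is that of `1 - e^{-y}`, namely `-Γ(σ)`, times `Γ(b) / Γ(b - σ)`. The substitution `w = (πu)²`,
with `b = d / 2` and `σ = -1/2 + πiτ`, expresses `K̂₂(τ)` through `Γ(σ) / Γ(b - σ)`, which has
neither zeros nor poles on this line. Convergence needs `₀F̃₁(; b; -w)` bounded for `w ≥ 0`;
this is a monotone energy argument, valid for `Re b ≥ 1/2`, hence for every `d ≥ 1`.
-/

section HalfLine

variable {F : Type*} [NormedAddCommGroup F] [NormedSpace ℝ F] {f f' : ℝ → F}

lemma isBigO_nhdsGT_zero_of_differentiableAt (hf : DifferentiableAt ℝ f 0) (h₀ : f 0 = 0) :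
    f =O[𝓝[>] 0] (· ^ (-(-1 : ℝ))) := by
  simpa [h₀] using hf.isBigO_sub.mono nhdsWithin_le_nhds

lemma integral_Ioi_of_hasDerivAt_of_tendsto_nhdsGT [CompleteSpace F] {a : ℝ} {l m : F}
    (hderiv : ∀ x ∈ Ioi a, HasDerivAt f (f' x) x) (hint : IntegrableOn f' (Ioi a))
    (hbot : Tendsto f (𝓝[>] a) (𝓝 l)) (htop : Tendsto f atTop (𝓝 m)) :
    ∫ x in Ioi a, f' x = m - l := by
  rw [← Ici_sdiff_left] at hbot
  have hupdate : ∀ x ∈ Ioi a, HasDerivAt (Function.update f a l) (f' x) x := fun x hx =>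
    (hderiv x hx).congr_of_eventuallyEq <|
      (eventually_ne_nhds (ne_of_gt hx)).mono fun y hy => Function.update_of_ne hy l f
  simpa using integral_Ioi_of_hasDerivAt_of_tendsto (continuousWithinAt_update_same.2 hbot)
    hupdate hint <| htop.congr' <|
      (eventually_ne_atTop a).mono fun y hy => (Function.update_of_ne hy l f).symm

end HalfLine

section MellinTransform

variable {F : Type*} [NormedAddCommGroup F] [NormedSpace ℂ F] {f f' : ℝ → F} {a b : ℝ} {s : ℂ}

lemma ofReal_cpow_isBigO_nhdsGT_zero :
    (fun t : ℝ => (t : ℂ) ^ s) =O[𝓝[>] 0] (fun t : ℝ => t ^ s.re) := by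
  refine .of_bound 1 ?_
  filter_upwards [self_mem_nhdsWithin] with t ht
  simp [norm_cpow_eq_rpow_re_of_pos ht, abs_of_pos (Real.rpow_pos_of_pos ht _)]

lemma tendsto_cpow_smul_nhdsGT_zero (hf : f =O[𝓝[>] 0] (· ^ (-b))) (hb : b < s.re) :
    Tendsto (fun t : ℝ => (t : ℂ) ^ s • f t) (𝓝[>] 0) (𝓝 0) := by
  have hlim : Tendsto (fun t : ℝ => t ^ (s.re - b)) (𝓝[>] 0) (𝓝 0) := by
    simpa [Real.zero_rpow (sub_pos.2 hb).ne'] using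
      (Real.continuousAt_rpow_const 0 (s.re - b) (.inr (sub_pos.2 hb).le)).tendsto.mono_left
        nhdsWithin_le_nhds
  refine ((ofReal_cpow_isBigO_nhdsGT_zero.smul hf).congr' .rfl ?_).trans_tendsto hlim
  filter_upwards [self_mem_nhdsWithin] with t ht
  rw [smul_eq_mul, ← Real.rpow_add ht, sub_eq_add_neg]

lemma tendsto_cpow_smul_atTop (hf : f =O[atTop] (· ^ (-a))) (ha : s.re < a) :
    Tendsto (fun t : ℝ => (t : ℂ) ^ s • f t) atTop (𝓝 0) := by
  have hlim : Tendsto (fun t : ℝ => t ^ (-(a - s.re))) atTop (𝓝 0) :=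
    tendsto_rpow_neg_atTop (sub_pos.2 ha)
  refine (((norm_ofReal_cpow_eventually_eq_atTop s).isBigO.of_norm_left.smul hf).congr' .rfl
    ?_).trans_tendsto hlim
  filter_upwards [eventually_gt_atTop 0] with t ht
  rw [smul_eq_mul, ← Real.rpow_add ht, neg_sub, sub_eq_add_neg]

lemma mellin_deriv [CompleteSpace F] (hderiv : ∀ t ∈ Ioi 0, HasDerivAt f (f' t) t)
    (hf_top : f =O[atTop] (· ^ (-a))) (ha : s.re < a)
    (hf_bot : f =O[𝓝[>] 0] (· ^ (-b))) (hb : b < s.re)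
    (hf' : MellinConvergent f' (s + 1)) :
    mellin f' (s + 1) = -s • mellin f s := by
  have hf : MellinConvergent f s := by
    refine mellinConvergent_of_isBigO_rpow (ContinuousOn.locallyIntegrableOn ?_ measurableSet_Ioi)
      hf_top ha hf_bot hb
    exact fun t ht => (hderiv t ht).continuousAt.continuousWithinAt
  have hprod : ∀ t ∈ Ioi (0 : ℝ), HasDerivAt (fun t : ℝ => (t : ℂ) ^ s • f t)
      ((t : ℂ) ^ (s + 1 - 1) • f' t + s • ((t : ℂ) ^ (s - 1) • f t)) t := by
    intro t ht
    have hcpow : HasDerivAt (fun t : ℝ => (t : ℂ) ^ s) (s * (t : ℂ) ^ (s - 1)) t := by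
      simpa using ((hasDerivAt_id (t : ℂ)).cpow_const (ofReal_mem_slitPlane.2 ht)).comp_ofReal
    simpa [smul_smul, Pi.smul_def'] using hcpow.smul (hderiv t ht)
  have hparts := integral_Ioi_of_hasDerivAt_of_tendsto_nhdsGT hprod (hf'.add (hf.smul s))
    (tendsto_cpow_smul_nhdsGT_zero hf_bot hb) (tendsto_cpow_smul_atTop hf_top ha)
  have hsum : mellin f' (s + 1) + s • mellin f s = 0 := by
    rw [mellin, mellin, ← integral_smul]
    exact (integral_add hf' (hf.smul s)).symm.trans (hparts.trans (sub_zero 0))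
  rw [neg_smul, eq_neg_of_add_eq_zero_left hsum]

end MellinTransform

section LaplaceTransform

variable {F : Type*} [NormedAddCommGroup F] [NormedSpace ℂ F]

lemma integrableOn_cpow_mul_exp_neg_mul_Ioi {a : ℂ} {r : ℝ} (ha : 0 < a.re) (hr : 0 < r) :
    IntegrableOn (fun t : ℝ => (t : ℂ) ^ (a - 1) * Complex.exp (-(r * t))) (Ioi 0) := by
  refine .of_integral_ne_zero ?_
  rw [Complex.integral_cpow_mul_exp_neg_mul_Ioi ha hr]
  exact mul_ne_zero (by simp [hr.ne']) (Complex.Gamma_ne_zero_of_re_pos ha)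

lemma integral_norm_cpow_mul_exp_neg_mul_Ioi {a : ℂ} {r : ℝ} (ha : 0 < a.re) (hr : 0 < r) :
    ∫ t in Ioi (0 : ℝ), ‖(t : ℂ) ^ (a - 1) * Complex.exp (-(r * t))‖ =
      (1 / r) ^ a.re * Real.Gamma a.re := by
  rw [← Real.integral_rpow_mul_exp_neg_mul_Ioi ha hr]
  refine setIntegral_congr_fun measurableSet_Ioi fun t ht => ?_
  simp [norm_cpow_eq_rpow_re_of_pos ht, Complex.norm_exp]

lemma integrable_cpow_mul_exp_neg_mul_smul_cpow_smul {g : ℝ → F} {s : ℂ} (hs : 0 < s.re)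
    (hg : IntegrableOn g (Ioi 0)) :
    Integrable (fun p : ℝ × ℝ =>
        ((p.1 : ℂ) ^ (s - 1) * Complex.exp (-(p.2 * p.1))) • (p.2 : ℂ) ^ s • g p.2)
      ((volume.restrict (Ioi 0)).prod (volume.restrict (Ioi 0))) := by
  have hmeas : AEStronglyMeasurable (fun p : ℝ × ℝ =>
      ((p.1 : ℂ) ^ (s - 1) * Complex.exp (-(p.2 * p.1))) • (p.2 : ℂ) ^ s • g p.2)
      ((volume.restrict (Ioi 0)).prod (volume.restrict (Ioi 0))) := by
    refine .smul (Measurable.aestronglyMeasurable (by fun_prop)) (.smul ?_ hg.1.comp_snd)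
    exact Measurable.aestronglyMeasurable (by fun_prop)
  refine (integrable_prod_iff' hmeas).2 ⟨?_, (hg.norm.const_mul (Real.Gamma s.re)).congr ?_⟩
  all_goals filter_upwards [ae_restrict_mem measurableSet_Ioi] with t ht
  · exact Integrable.smul_const (integrableOn_cpow_mul_exp_neg_mul_Ioi hs ht) _
  · simp only [norm_smul _ ((t : ℂ) ^ s • g t), integral_mul_const]
    rw [integral_norm_cpow_mul_exp_neg_mul_Ioi hs ht, norm_smul, norm_cpow_eq_rpow_re_of_pos ht,
      one_div, Real.inv_rpow (le_of_lt ht)]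
    field_simp [(Real.rpow_pos_of_pos ht s.re).ne']

lemma mellin_laplace [CompleteSpace F] {f : ℝ → F} {s : ℂ} (hs : 0 < s.re)
    (hf : MellinConvergent f (1 - s)) :
    mellin (fun x : ℝ => ∫ t in Ioi (0 : ℝ), Complex.exp (-(x * t)) • f t) s =
      Complex.Gamma s • mellin f (1 - s) := by
  let g : ℝ → F := fun t => (t : ℂ) ^ (1 - s - 1) • f t
  let kernel : ℝ → ℝ → F := fun x t =>
    ((x : ℂ) ^ (s - 1) * Complex.exp (-(t * x))) • (t : ℂ) ^ s • g t
  have hinner : ∀ t ∈ Ioi (0 : ℝ), ∫ x in Ioi (0 : ℝ), kernel x t = Complex.Gamma s • g t := by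
    intro t ht
    have hts : (1 / t : ℂ) ^ s * (t : ℂ) ^ s = 1 := by
      rw [← ofReal_one, ← ofReal_div,
        ← mul_cpow_ofReal_nonneg (one_div_nonneg.2 (le_of_lt ht)) (le_of_lt ht)]
      simp [ne_of_gt (mem_Ioi.1 ht)]
    rw [integral_smul_const, Complex.integral_cpow_mul_exp_neg_mul_Ioi hs ht, smul_smul,
      mul_right_comm, hts, one_mul]
  have houter : ∀ x, ∫ t in Ioi (0 : ℝ), kernel x t =
      (x : ℂ) ^ (s - 1) • ∫ t in Ioi (0 : ℝ), Complex.exp (-(x * t)) • f t := by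
    intro x
    rw [← integral_smul]
    refine setIntegral_congr_fun measurableSet_Ioi fun t ht => ?_
    have hts : (t : ℂ) ^ s * (t : ℂ) ^ (1 - s - 1) = 1 := by
      rw [← cpow_add _ _ (ofReal_ne_zero.2 (ne_of_gt ht))]
      simp
    simp only [kernel, g]
    rw [smul_smul _ _ (f t), hts, one_smul, mul_smul, mul_comm (t : ℂ)]
  rw [mellin, mellin, ← integral_smul, ← setIntegral_congr_fun measurableSet_Ioi hinner,
    ← integral_integral_swap (integrable_cpow_mul_exp_neg_mul_smul_cpow_smul hs hf)]
  simp only [houter]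

end LaplaceTransform

/-- The regularized confluent hypergeometric limit function
`₀F̃₁(; b; z) = ∑ zᵏ / (k! Γ(b + k))`, with no upper parameter. It is the Bessel function without
its power factor: `J_ν(2x) = x^ν ₀F̃₁(; ν + 1; -x²)`. -/
def regularizedLimitHGFun (b z : ℂ) : ℂ :=
  regularizedHGFun 0 {b} z

namespace regularizedLimitHGFun

variable (b z : ℂ)

lemma coeff_eq (k : ℕ) :
    regularizedHGFunCoeff 0 {b} k = (k.factorial * Complex.Gamma (b + k))⁻¹ := by
  simp [regularizedHGFunCoeff]

lemma succ_mul_coeff_succ (k : ℕ) :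
    (k + 1) * regularizedHGFunCoeff 0 {b} (k + 1) = regularizedHGFunCoeff 0 {b + 1} k := by
  have hk : (k + 1 : ℂ) ≠ 0 := Nat.cast_add_one_ne_zero k
  rw [coeff_eq, coeff_eq, Nat.factorial_succ, show b + (k + 1 : ℕ) = b + 1 + k by push_cast; ring]
  push_cast
  field_simp

lemma coeff_eq_add_mul_coeff (k : ℕ) :
    regularizedHGFunCoeff 0 {b} k = (b + k) * regularizedHGFunCoeff 0 {b + 1} k := by
  rw [coeff_eq, coeff_eq, mul_inv, mul_inv, one_div_Gamma_eq_self_mul_one_div_Gamma_add_one,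
    add_right_comm b 1]
  ring

lemma hasFPowerSeriesOnBall :
    HasFPowerSeriesOnBall (regularizedLimitHGFun b) (regularizedHGFunSeries 0 {b}) 0 ⊤ := by
  have hradius : (regularizedHGFunSeries 0 {b}).radius = ⊤ :=
    radius_regularizedHGFunSeries_eq_top (by simp)
  exact hradius ▸ (regularizedHGFunSeries 0 {b}).hasFPowerSeriesOnBall (by simp [hradius])

lemma hasSum : HasSum (fun k => regularizedHGFunCoeff 0 {b} k * z ^ k)
    (regularizedLimitHGFun b z) := by
  simpa [FormalMultilinearSeries.apply_eq_pow_smul_coeff, mul_comm] using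
    (hasFPowerSeriesOnBall b).hasSum (y := z) (by simp)

lemma apply_zero : regularizedLimitHGFun b 0 = (Complex.Gamma b)⁻¹ := by
  refine (hasSum b 0).unique ?_
  simpa [coeff_eq] using hasSum_single 0 (f := fun k => regularizedHGFunCoeff 0 {b} k * 0 ^ k)
    (fun k hk => by simp [hk])

lemma hasDerivAt : HasDerivAt (regularizedLimitHGFun b) (regularizedLimitHGFun (b + 1) z) z := by
  have hderiv : HasSum (fun k : ℕ => (k + 1) * regularizedHGFunCoeff 0 {b} (k + 1) * z ^ k)
      (deriv (regularizedLimitHGFun b) z) := by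
    simpa [FormalMultilinearSeries.apply_eq_pow_smul_coeff, mul_comm] using
      ((hasFPowerSeriesOnBall b).fderiv.hasSum (y := z) (by simp)).mapL
        (ContinuousLinearMap.apply ℂ ℂ (1 : ℂ))
  simp only [succ_mul_coeff_succ] at hderiv
  exact (hasSum (b + 1) z).unique hderiv ▸
    ((hasFPowerSeriesOnBall b).analyticAt_of_mem (by simp)).differentiableAt.hasDerivAt

lemma hasSum_natCast_mul : HasSum (fun k : ℕ => k * regularizedHGFunCoeff 0 {b} k * z ^ k)
    (z * regularizedLimitHGFun (b + 1) z) := by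
  rw [← hasSum_nat_add_iff' 1]
  simpa [succ_mul_coeff_succ, pow_succ', mul_left_comm] using (hasSum (b + 1) z).mul_left z

lemma eq_mul_add_mul :
    regularizedLimitHGFun b z =
      b * regularizedLimitHGFun (b + 1) z + z * regularizedLimitHGFun (b + 1 + 1) z := by
  refine (hasSum b z).unique ?_
  simpa only [coeff_eq_add_mul_coeff b, add_mul, mul_assoc] using
    ((hasSum (b + 1) z).mul_left b).add (hasSum_natCast_mul (b + 1) z)

lemma hasDerivAt_comp_neg_ofReal (w : ℝ) :
    HasDerivAt (fun t : ℝ => regularizedLimitHGFun b (-t)) (-regularizedLimitHGFun (b + 1) (-w))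
      w := by
  have h : HasDerivAt (fun t : ℝ => -(t : ℂ)) (-1) w := (hasDerivAt_id w).ofReal_comp.neg
  simpa [Function.comp_def] using (hasDerivAt b (-w)).comp w h

-- The recurrence `eq_mul_add_mul` cancels the cross terms, which makes this energy antitone as soon
-- as `1 / 2 ≤ b.re`.
lemma hasDerivAt_energy (w : ℝ) :
    HasDerivAt (fun t : ℝ => ‖regularizedLimitHGFun b (-t)‖ ^ 2 +
        t * ‖regularizedLimitHGFun (b + 1) (-t)‖ ^ 2)
      ((1 - 2 * b.re) * ‖regularizedLimitHGFun (b + 1) (-w)‖ ^ 2) w := by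
  have h₀ := (hasDerivAt_comp_neg_ofReal b w).norm_sq
  have h₁ := (hasDerivAt_comp_neg_ofReal (b + 1) w).norm_sq
  convert! h₀.add ((hasDerivAt_id w).mul h₁) using 1
  rw [eq_mul_add_mul b (-w)]
  simp [Complex.inner, ← normSq_eq_norm_sq, normSq_apply]
  ring

lemma norm_Gamma_mul_le_one {b : ℂ} (hb : 1 / 2 ≤ b.re) {w : ℝ} (hw : 0 ≤ w) :
    ‖Complex.Gamma b * regularizedLimitHGFun b (-w)‖ ≤ 1 := by
  let energy : ℝ → ℝ := fun t => ‖regularizedLimitHGFun b (-t)‖ ^ 2 +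
    t * ‖regularizedLimitHGFun (b + 1) (-t)‖ ^ 2
  have hanti : Antitone energy := by
    refine antitone_of_hasDerivAt_nonpos (hasDerivAt_energy b) fun t => ?_
    exact mul_nonpos_of_nonpos_of_nonneg (by linarith) (sq_nonneg _)
  have hle : ‖regularizedLimitHGFun b (-w)‖ ≤ ‖Complex.Gamma b‖⁻¹ := by
    refine (sq_le_sq₀ (norm_nonneg _) (by positivity)).1 ?_
    calc ‖regularizedLimitHGFun b (-w)‖ ^ 2 ≤ energy w := le_add_of_nonneg_right (by positivity)
      _ ≤ energy 0 := hanti hw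
      _ = (‖Complex.Gamma b‖⁻¹) ^ 2 := by simp [energy, apply_zero]
  rw [norm_mul]
  exact (mul_le_mul_of_nonneg_left hle (norm_nonneg _)).trans mul_inv_le_one

end regularizedLimitHGFun

lemma mellin_one_sub_exp_neg {σ : ℂ} (hσ : -1 < σ.re) (hσ' : σ.re < 0) :
    mellin (fun y : ℝ => 1 - Complex.exp (-y)) σ = -Complex.Gamma σ := by
  have hσ₀ : σ ≠ 0 := fun h => by simp [h] at hσ'
  have hσ₁ : 0 < (σ + 1).re := by simpa using neg_lt_iff_pos_add.1 hσ
  have hderiv : ∀ y : ℝ, HasDerivAt (fun y : ℝ => 1 - Complex.exp (-y)) (Complex.exp (-y)) y := by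
    intro y
    simpa using ((hasDerivAt_neg (y : ℂ)).cexp.const_sub 1).comp_ofReal
  have hbdd : (fun y : ℝ => 1 - Complex.exp (-y)) =O[atTop] (· ^ (-(0 : ℝ))) := by
    have hlim : Tendsto (fun y : ℝ => 1 - Complex.exp (-y)) atTop (𝓝 1) := by
      simpa using ((tendsto_exp_neg_atTop_nhds_zero.ofReal).const_sub 1)
    simpa using hlim.isBigO_one ℝ
  have hconv : MellinConvergent (fun y : ℝ => Complex.exp (-y)) (σ + 1) := by
    simpa [MellinConvergent, mul_comm] using Complex.GammaIntegral_convergent hσ₁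
  have hGamma : mellin (fun y : ℝ => Complex.exp (-y)) (σ + 1) = Complex.Gamma (σ + 1) := by
    simp [Complex.Gamma_eq_integral hσ₁, Complex.GammaIntegral_eq_mellin]
  have hparts := mellin_deriv (fun y _ => hderiv y) hbdd hσ'
    (isBigO_nhdsGT_zero_of_differentiableAt (hderiv 0).differentiableAt (by simp)) hσ hconv
  rw [hGamma, Complex.Gamma_add_one σ hσ₀, smul_eq_mul, neg_mul, ← mul_neg] at hparts
  rw [mul_left_cancel₀ hσ₀ hparts, neg_neg]

lemma Gamma_re_add_natCast_mul_norm_le {b : ℂ} (hb : 0 < b.re) (k : ℕ) :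
    Real.Gamma (b.re + k) * ‖Complex.Gamma b‖ ≤ Real.Gamma b.re * ‖Complex.Gamma (b + k)‖ := by
  induction k with
  | zero => simp
  | succ k ih =>
    have hre : 0 < b.re + k := by positivity
    have hne : b + k ≠ 0 := fun h => by simpa [hre.ne'] using congrArg Complex.re h
    have hle : b.re + k ≤ ‖b + k‖ := by simpa using Complex.re_le_norm (b + k)
    push_cast
    rw [← add_assoc, ← add_assoc, Real.Gamma_add_one hre.ne', Complex.Gamma_add_one _ hne, norm_mul]
    calc (b.re + k) * Real.Gamma (b.re + k) * ‖Complex.Gamma b‖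
        = (b.re + k) * (Real.Gamma (b.re + k) * ‖Complex.Gamma b‖) := mul_assoc _ _ _
      _ ≤ ‖b + k‖ * (Real.Gamma b.re * ‖Complex.Gamma (b + k)‖) := by gcongr
      _ = Real.Gamma b.re * (‖b + k‖ * ‖Complex.Gamma (b + k)‖) := mul_left_comm _ _ _

namespace regularizedLimitHGFun

variable {b : ℂ} {x : ℝ}

lemma norm_coeff_mul_Gamma_le (hb : 0 < b.re) (k : ℕ) :
    ‖regularizedHGFunCoeff 0 {b} k‖ * Real.Gamma (b.re + k) ≤
      Real.Gamma b.re / ‖Complex.Gamma b‖ / k.factorial := by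
  have hΓ : 0 < ‖Complex.Gamma b‖ := norm_pos_iff.2 (Complex.Gamma_ne_zero_of_re_pos hb)
  have hΓk : 0 < ‖Complex.Gamma (b + k)‖ :=
    norm_pos_iff.2 (Complex.Gamma_ne_zero_of_re_pos (by simpa using by positivity))
  rw [coeff_eq, norm_inv, norm_mul, Complex.norm_natCast, div_div, inv_mul_eq_div,
    div_le_div_iff₀ (by positivity) (by positivity)]
  calc Real.Gamma (b.re + k) * (‖Complex.Gamma b‖ * k.factorial)
      = k.factorial * (Real.Gamma (b.re + k) * ‖Complex.Gamma b‖) := by ring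
    _ ≤ k.factorial * (Real.Gamma b.re * ‖Complex.Gamma (b + k)‖) :=
        mul_le_mul_of_nonneg_left (Gamma_re_add_natCast_mul_norm_le hb k) (by positivity)
    _ = Real.Gamma b.re * (k.factorial * ‖Complex.Gamma (b + k)‖) := mul_left_comm _ _ _

lemma hasSum_cpow_mul_exp_neg_mul (b : ℂ) (x : ℝ) {w : ℝ} (hw : 0 < w) :
    HasSum (fun k : ℕ => regularizedHGFunCoeff 0 {b} k * (-1) ^ k *
        ((w : ℂ) ^ (b + k - 1) * Complex.exp (-(x * w))))
      ((w : ℂ) ^ (b - 1) * Complex.exp (-(x * w)) * regularizedLimitHGFun b (-w)) := by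
  refine ((hasSum b (-w)).mul_left _).congr_fun fun k => ?_
  rw [add_sub_right_comm, cpow_add _ _ (ofReal_ne_zero.2 hw.ne'), cpow_natCast, neg_pow]
  ring

lemma integral_coeff_mul_cpow_mul_exp_neg_mul (hb : 0 < b.re) (hx : 0 < x) (k : ℕ) :
    ∫ w in Ioi (0 : ℝ), regularizedHGFunCoeff 0 {b} k * (-1) ^ k *
        ((w : ℂ) ^ (b + k - 1) * Complex.exp (-(x * w))) =
      (1 / x) ^ b * ((-(1 / x)) ^ k / k.factorial) := by
  have hbk : 0 < (b + k).re := by simpa using by positivity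
  have hΓ : Complex.Gamma (b + k) ≠ 0 := Complex.Gamma_ne_zero_of_re_pos hbk
  rw [integral_const_mul, Complex.integral_cpow_mul_exp_neg_mul_Ioi hbk hx,
    cpow_add _ _ (by simp [hx.ne']), cpow_natCast, coeff_eq, neg_pow (1 / x : ℂ), mul_inv]
  field_simp

lemma integral_norm_coeff_mul_cpow_mul_exp_neg_mul_le (hb : 0 < b.re) (hx : 0 < x) (k : ℕ) :
    ∫ w in Ioi (0 : ℝ), ‖regularizedHGFunCoeff 0 {b} k * (-1) ^ k *
        ((w : ℂ) ^ (b + k - 1) * Complex.exp (-(x * w)))‖ ≤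
      (1 / x) ^ b.re * (Real.Gamma b.re / ‖Complex.Gamma b‖) * ((1 / x) ^ k / k.factorial) := by
  have hbk : 0 < (b + k).re := by simpa using by positivity
  simp only [norm_mul _ (_ * Complex.exp _), integral_const_mul]
  rw [integral_norm_cpow_mul_exp_neg_mul_Ioi hbk hx, Complex.add_re, Complex.natCast_re,
    Real.rpow_add (by positivity), Real.rpow_natCast, norm_mul, norm_pow, norm_neg, norm_one,
    one_pow, mul_one]
  calc ‖regularizedHGFunCoeff 0 {b} k‖ * ((1 / x) ^ b.re * (1 / x) ^ k * Real.Gamma (b.re + k))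
      = (1 / x) ^ b.re * (1 / x) ^ k *
          (‖regularizedHGFunCoeff 0 {b} k‖ * Real.Gamma (b.re + k)) := mul_left_comm _ _ _
    _ ≤ (1 / x) ^ b.re * (1 / x) ^ k * (Real.Gamma b.re / ‖Complex.Gamma b‖ / k.factorial) :=
        mul_le_mul_of_nonneg_left (norm_coeff_mul_Gamma_le hb k) (by positivity)
    _ = (1 / x) ^ b.re * (Real.Gamma b.re / ‖Complex.Gamma b‖) * ((1 / x) ^ k / k.factorial) := by
        ring

lemma integral_cpow_mul_exp_neg_mul (hb : 0 < b.re) (hx : 0 < x) :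
    ∫ w in Ioi (0 : ℝ), (w : ℂ) ^ (b - 1) * Complex.exp (-(x * w)) * regularizedLimitHGFun b (-w) =
      (1 / x) ^ b * Complex.exp (-(1 / x)) := by
  let term : ℕ → ℝ → ℂ := fun k w => regularizedHGFunCoeff 0 {b} k * (-1) ^ k *
    ((w : ℂ) ^ (b + k - 1) * Complex.exp (-(x * w)))
  have hint : ∀ k, IntegrableOn (term k) (Ioi 0) := fun k =>
    (integrableOn_cpow_mul_exp_neg_mul_Ioi (by simpa using by positivity) hx).const_mul _
  have hsummable : Summable fun k => ∫ w in Ioi (0 : ℝ), ‖term k w‖ :=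
    .of_nonneg_of_le (fun k => integral_nonneg fun w => norm_nonneg _)
      (integral_norm_coeff_mul_cpow_mul_exp_neg_mul_le hb hx)
      ((Real.summable_pow_div_factorial (1 / x)).mul_left _)
  have hseries : HasSum (fun k => ∫ w in Ioi (0 : ℝ), term k w)
      ((1 / x) ^ b * Complex.exp (-(1 / x))) := by
    have hexp := NormedSpace.expSeries_div_hasSum_exp (-(1 / x : ℂ))
    rw [← Complex.exp_eq_exp_ℂ] at hexp
    simpa only [term, integral_coeff_mul_cpow_mul_exp_neg_mul hb hx] using hexp.mul_left _
  rw [hseries.unique (hasSum_integral_of_summable_integral_norm hint hsummable)]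
  exact setIntegral_congr_fun measurableSet_Ioi fun w hw =>
    (hasSum_cpow_mul_exp_neg_mul b x hw).tsum_eq.symm

lemma integrableOn_cpow_mul_exp_neg_mul (hb : 0 < b.re) (hx : 0 < x) :
    IntegrableOn (fun w : ℝ => (w : ℂ) ^ (b - 1) * Complex.exp (-(x * w)) *
      regularizedLimitHGFun b (-w)) (Ioi 0) := by
  refine .of_integral_ne_zero ?_
  rw [integral_cpow_mul_exp_neg_mul hb hx]
  exact mul_ne_zero (by simp [hx.ne']) (Complex.exp_ne_zero _)

end regularizedLimitHGFun

/-- The defect `1 - Γ(b) ₀F̃₁(; b; -w)` of the normalized Bessel function, as a function of the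
squared variable `w = x²`, where `J_{b-1}(2x) = x^{b-1} ₀F̃₁(; b; -x²)`. It vanishes at `w = 0`. -/
def besselDefect (b : ℂ) (w : ℝ) : ℂ :=
  1 - Complex.Gamma b * regularizedLimitHGFun b (-w)

namespace besselDefect

variable {b σ : ℂ}

lemma apply_zero (hb : 0 < b.re) : besselDefect b 0 = 0 := by
  simp [besselDefect, regularizedLimitHGFun.apply_zero, Complex.Gamma_ne_zero_of_re_pos hb]

lemma differentiable (b : ℂ) : Differentiable ℝ (besselDefect b) := fun w =>
  (((regularizedLimitHGFun.hasDerivAt_comp_neg_ofReal b w).const_mul _).const_sub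
    1).differentiableAt

lemma mellinConvergent (hb : 1 / 2 ≤ b.re) (hσ : -1 < σ.re) (hσ' : σ.re < 0) :
    MellinConvergent (besselDefect b) σ := by
  have hbdd : besselDefect b =O[atTop] (· ^ (-(0 : ℝ))) := by
    refine .of_bound 2 ?_
    filter_upwards [eventually_ge_atTop 0] with w hw
    calc ‖besselDefect b w‖ ≤ ‖(1 : ℂ)‖ + ‖Complex.Gamma b * regularizedLimitHGFun b (-w)‖ :=
          norm_sub_le _ _
      _ ≤ 1 + 1 := by
          rw [norm_one]
          gcongr
          exact regularizedLimitHGFun.norm_Gamma_mul_le_one hb hw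
      _ = 2 * ‖w ^ (-(0 : ℝ))‖ := by norm_num
  exact mellinConvergent_of_isBigO_rpow
    ((differentiable b).continuous.locallyIntegrable.locallyIntegrableOn _) hbdd hσ'
    (isBigO_nhdsGT_zero_of_differentiableAt (differentiable b 0) (apply_zero (by linarith))) hσ

lemma integral_exp_neg_mul_smul_cpow_smul (hb : 0 < b.re) {x : ℝ} (hx : 0 < x) :
    ∫ w in Ioi (0 : ℝ), Complex.exp (-(x * w)) • (w : ℂ) ^ (b - 1) • besselDefect b w =
      Complex.Gamma b * ((1 / x) ^ b * (1 - Complex.exp (-(1 / x)))) := by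
  have hint := integral_sub (integrableOn_cpow_mul_exp_neg_mul_Ioi hb hx)
    ((regularizedLimitHGFun.integrableOn_cpow_mul_exp_neg_mul hb hx).const_mul (Complex.Gamma b))
  rw [Complex.integral_cpow_mul_exp_neg_mul_Ioi hb hx, integral_const_mul,
    regularizedLimitHGFun.integral_cpow_mul_exp_neg_mul hb hx] at hint
  calc _ = (1 / x) ^ b * Complex.Gamma b -
        Complex.Gamma b * ((1 / x) ^ b * Complex.exp (-(1 / x))) := by
        rw [← hint]
        congr! 2 with w
        simp only [besselDefect, smul_eq_mul]
        ring
    _ = _ := by ring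

lemma Gamma_mul_mellin (hb : 1 / 2 ≤ b.re) (hσ : -1 < σ.re) (hσ' : σ.re < 0) :
    Complex.Gamma (b - σ) * mellin (besselDefect b) σ = -(Complex.Gamma b * Complex.Gamma σ) := by
  have hs : 0 < (b - σ).re := by rw [Complex.sub_re]; linarith
  have hexponent : 1 - (b - σ) + (b - 1) = σ := by ring
  have hconv : MellinConvergent (fun w : ℝ => (w : ℂ) ^ (b - 1) • besselDefect b w)
      (1 - (b - σ)) := by
    rw [MellinConvergent.cpow_smul, hexponent]
    exact mellinConvergent hb hσ hσ'
  have hlaplace : ∀ x ∈ Ioi (0 : ℝ),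
      ∫ w in Ioi (0 : ℝ), Complex.exp (-(x * w)) • (w : ℂ) ^ (b - 1) • besselDefect b w =
        (x : ℂ) ^ (-b) • Complex.Gamma b • (1 - Complex.exp (-(x⁻¹ : ℝ))) := by
    intro x hx
    have harg : (x : ℂ).arg ≠ π := by
      simpa [arg_ofReal_of_nonneg (le_of_lt hx)] using pi_ne_zero.symm
    have hinv : (1 / x : ℂ) ^ b = (x : ℂ) ^ (-b) := by
      rw [one_div, cpow_neg, inv_cpow _ _ harg]
    rw [integral_exp_neg_mul_smul_cpow_smul (by linarith) hx, hinv]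
    simp only [smul_eq_mul, one_div, ofReal_inv]
    ring
  calc Complex.Gamma (b - σ) * mellin (besselDefect b) σ
      = mellin (fun x : ℝ => ∫ w in Ioi (0 : ℝ), Complex.exp (-(x * w)) •
          (w : ℂ) ^ (b - 1) • besselDefect b w) (b - σ) := by
        rw [mellin_laplace hs hconv, mellin_cpow_smul, hexponent, smul_eq_mul]
    _ = mellin (fun x : ℝ => (x : ℂ) ^ (-b) • Complex.Gamma b •
          (1 - Complex.exp (-(x⁻¹ : ℝ)))) (b - σ) :=
        setIntegral_congr_fun measurableSet_Ioi fun x hx => congrArg _ (hlaplace x hx)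
    _ = Complex.Gamma b * mellin (fun y : ℝ => 1 - Complex.exp (-y)) σ := by
        rw [mellin_cpow_smul, mellin_const_smul, smul_eq_mul,
          mellin_comp_inv (fun y : ℝ => 1 - Complex.exp (-y)), show -(b - σ + -b) = σ by ring]
    _ = -(Complex.Gamma b * Complex.Gamma σ) := by
        rw [mellin_one_sub_exp_neg hσ hσ', mul_neg]

end besselDefect

lemma ofReal_besselJ_two_mul_div_rpow (ν : ℝ) {x : ℝ} (hx : 0 < x) :
    ((besselJ ν (2 * x) / x ^ ν : ℝ) : ℂ) = regularizedLimitHGFun (ν + 1) (-(x ^ 2 : ℝ)) := by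
  rw [besselJ, ← tsum_div_const, ofReal_tsum, ← (regularizedLimitHGFun.hasSum _ _).tsum_eq]
  refine tsum_congr fun k => ?_
  have hxν : x ^ ν ≠ 0 := (Real.rpow_pos_of_pos hx ν).ne'
  have hpow : (2 * x / 2) ^ (ν + 2 * k) = x ^ ν * (x ^ 2) ^ k := by
    rw [mul_div_cancel_left₀ x two_ne_zero, Real.rpow_add hx, ← pow_mul]
    exact_mod_cast rfl
  have hΓ : Complex.Gamma (ν + 1 + k) = (Real.Gamma (ν + k + 1) : ℝ) := by
    rw [← Complex.Gamma_ofReal, add_right_comm]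
    push_cast
    rfl
  have hterm : (-1) ^ k * (2 * x / 2) ^ (ν + 2 * k) / (k.factorial * Real.Gamma (ν + k + 1)) /
      x ^ ν = (k.factorial * Real.Gamma (ν + k + 1))⁻¹ * (-x ^ 2) ^ k := by
    rw [hpow, neg_pow (x ^ 2)]
    field_simp
  rw [hterm, regularizedLimitHGFun.coeff_eq, hΓ]
  push_cast
  rfl

lemma ofReal_kernelL (d : ℕ) {u : ℝ} (hu : 0 < u) :
    (kernelL d u : ℂ) =
      (π ^ (-(3 : ℝ) / 2) * (Real.Gamma ((d + 1) / 2) / Real.Gamma (d / 2)) : ℝ) *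
        besselDefect (d / 2) ((π * u) ^ (2 : ℝ)) := by
  have hΓ : (Real.Gamma (d / 2) : ℂ) = Complex.Gamma (d / 2) := by simp [← Complex.Gamma_ofReal]
  have hbessel := ofReal_besselJ_two_mul_div_rpow (d / 2 - 1) (mul_pos Real.pi_pos hu)
  rw [kernelL, mul_assoc 2, mul_div_assoc, ofReal_mul, ofReal_sub, ofReal_mul (Real.Gamma _),
    hbessel, besselDefect, hΓ, Real.rpow_two]
  push_cast
  rw [sub_add_cancel]

lemma K2hat_eq_mellin (d : ℕ) (τ : ℝ) :
    K2hat d τ =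
      (π ^ (-(3 : ℝ) / 2) * (Real.Gamma ((d + 1) / 2) / Real.Gamma (d / 2)) : ℝ) *
        (π ^ (1 - 2 * π * I * τ) *
          (1 / 2 * mellin (besselDefect (d / 2)) (-1 / 2 + π * I * τ))) := by
  have hscale : mellin (fun u : ℝ => besselDefect (d / 2) ((π * u) ^ (2 : ℝ)))
      (2 * (-1 / 2 + π * I * τ)) = π ^ (1 - 2 * π * I * τ) *
        (1 / 2 * mellin (besselDefect (d / 2)) (-1 / 2 + π * I * τ)) := by
    rw [mellin_comp_mul_left (fun u : ℝ => besselDefect (d / 2) (u ^ (2 : ℝ))) _ Real.pi_pos,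
      mellin_comp_rpow, ofReal_ofNat, mul_div_cancel_left₀ _ two_ne_zero]
    congr 1
    · ring_nf
    · simp
  rw [← hscale, mellin, ← integral_const_mul, K2hat]
  refine setIntegral_congr_fun measurableSet_Ioi fun u hu => ?_
  rw [ofReal_kernelL d hu, smul_eq_mul, mul_left_comm]
  ring_nf

lemma K2hat_eq_Gamma_mul_div {d : ℕ} (hd : 1 ≤ d) (τ : ℝ) :
    K2hat d τ = -(π ^ (-1 / 2 - 2 * π * I * τ : ℂ) / 2) *
      (Complex.Gamma ((d + 1) / 2) * Complex.Gamma (-1 / 2 + π * I * τ) /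
        Complex.Gamma ((d + 1) / 2 - π * I * τ)) := by
  have hd' : (1 : ℝ) ≤ d := Nat.one_le_cast.2 hd
  have hσ : (-1 / 2 + π * I * τ : ℂ).re = -1 / 2 := by simp
  have hΓ₁ : Complex.Gamma ((d + 1) / 2 - π * I * τ) ≠ 0 :=
    Complex.Gamma_ne_zero_of_re_pos (by simpa using by positivity)
  have hΓ₂ : Complex.Gamma (d / 2) ≠ 0 :=
    Complex.Gamma_ne_zero_of_re_pos (by simpa using by linarith)
  have hmellin : mellin (besselDefect (d / 2)) (-1 / 2 + π * I * τ) =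
      -(Complex.Gamma (d / 2) * Complex.Gamma (-1 / 2 + π * I * τ)) /
        Complex.Gamma ((d + 1) / 2 - π * I * τ) := by
    rw [eq_div_iff hΓ₁, mul_comm, ← besselDefect.Gamma_mul_mellin (by simpa using by linarith)
      (by linarith) (by linarith)]
    ring_nf
  have hpi : (π : ℂ) ^ (-1 / 2 - 2 * π * I * τ) =
      (π : ℂ) ^ (-3 / 2 : ℂ) * (π : ℂ) ^ (1 - 2 * π * I * τ) := by
    rw [← cpow_add _ _ (ofReal_ne_zero.2 Real.pi_ne_zero)]
    ring_nf
  rw [K2hat_eq_mellin, hmellin, hpi]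
  push_cast [ofReal_cpow Real.pi_pos.le, ← Complex.Gamma_ofReal]
  field_simp

lemma Gamma_neg_one_half : Complex.Gamma (-1 / 2) = -2 * (π : ℂ) ^ (1 / 2 : ℂ) := by
  have h := Complex.Gamma_add_one (-1 / 2) (by norm_num)
  rw [show (-1 / 2 + 1 : ℂ) = 1 / 2 by norm_num, Complex.Gamma_one_half_eq] at h
  linear_combination 2 * h

lemma Gamma_ne_zero_of_re_eq_neg_one_half {s : ℂ} (hs : s.re = -1 / 2) : Complex.Gamma s ≠ 0 := by
  refine Complex.Gamma_ne_zero fun m hm => ?_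
  have hre : s.re = -m := by simp [hm]
  have hcast : (2 * m : ℝ) = 1 := by linarith
  have htwo : 2 * m = 1 := mod_cast hcast
  omega

/-- `K̂₂(0) = 1` and `K̂₂` has no real root. -/
theorem K2hat_ne_zero (d : ℕ) (hd : 1 ≤ d) :
    K2hat d 0 = 1 ∧ ∀ τ : ℝ, K2hat d τ ≠ 0 := by
  have hpi : (π : ℂ) ≠ 0 := ofReal_ne_zero.2 Real.pi_ne_zero
  have hΓ : ∀ τ : ℝ, Complex.Gamma ((d + 1) / 2 - π * I * τ) ≠ 0 := fun τ =>
    Complex.Gamma_ne_zero_of_re_pos (by simpa using by positivity)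
  have hΓ₀ : Complex.Gamma ((d + 1) / 2) ≠ 0 := by simpa using hΓ 0
  constructor
  · have hcancel : (π : ℂ) ^ (-1 / 2 : ℂ) * (π : ℂ) ^ (1 / 2 : ℂ) = 1 := by
      rw [← cpow_add _ _ hpi]
      norm_num
    rw [K2hat_eq_Gamma_mul_div hd, ofReal_zero, mul_zero, mul_zero, sub_zero, sub_zero, add_zero,
      Gamma_neg_one_half, mul_div_cancel_left₀ _ hΓ₀]
    linear_combination hcancel
  · intro τ
    have hpow : (π : ℂ) ^ (-1 / 2 - 2 * π * I * τ : ℂ) ≠ 0 := by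
      simp [cpow_eq_zero_iff, hpi]
    have hσ : Complex.Gamma (-1 / 2 + π * I * τ) ≠ 0 :=
      Gamma_ne_zero_of_re_eq_neg_one_half (by simp)
    rw [K2hat_eq_Gamma_mul_div hd]
    exact mul_ne_zero (neg_ne_zero.2 (div_ne_zero hpow two_ne_zero))
      (div_ne_zero (mul_ne_zero hΓ₀ hσ) (hΓ τ))

end
end

section
/- Let D ⊂ ℝ^d be a bounded measurable set and h > 0. Then ∫₀^∞ (d·κ_d − 2π (hρ)^{1−d/2} J_{d/2−1}(2πhρ)) ρ^{d−1} γ̄̂_D(ρ) dρ = γ̄_D(0) − γ̄_D(h), where γ̄_D is the isotropic covariogram of D and γ̄̂_D the rotational quadratic average of the Fourier transform of I_D. -/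
open MeasureTheory Metric Set Real Complex Filter
open scoped FourierTransform RealInnerProductSpace Pointwise ENNReal Topology

noncomputable section

/-!
By the Wiener–Khinchin theorem the covariogram is the Fourier transform of `|Î_D|²`, so
`γ_D(x) = ∫ cos (2π ⟪x, ξ⟫) |Î_D(ξ)|² dξ`. Averaging over `|x| = h` replaces the cosine by its
spherical mean, which depends only on `h |ξ|`, and polar coordinates in `ξ` turn the result into an
integral against the spherical averages of `|Î_D|²`; subtracting from the value at `x = 0`
produces the kernel of the theorem.

The spherical mean of the cosine is computed term by term from its power series. The even moments
of `θ ↦ ⟪e, θ⟫` on the sphere come from evaluating the Gaussian integral of `⟪e, x⟫ ^ (2k)` in two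
ways, as a product in an orthonormal basis containing `e` and in polar coordinates, and the
duplication formula for the Gamma function identifies the resulting series with that of the Bessel
function.
-/

section Polar

variable {V F : Type*} [NormedAddCommGroup V] [NormedSpace ℝ V] [FiniteDimensional ℝ V]
  [Nontrivial V] [MeasurableSpace V] [BorelSpace V] (μ : Measure V) [μ.IsAddHaarMeasure]
  [NormedAddCommGroup F] [NormedSpace ℝ F]

lemma integral_volumeIoiPow (n : ℕ) (f : ℝ → F) :
    ∫ r : Ioi (0 : ℝ), f r ∂(Measure.volumeIoiPow n) = ∫ r in Ioi (0 : ℝ), r ^ n • f r := by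
  simp only [Measure.volumeIoiPow, ENNReal.ofReal]
  rw [integral_withDensity_eq_integral_smul (measurable_subtype_coe.pow_const _).real_toNNReal,
    integral_subtype_comap measurableSet_Ioi fun r ↦ Real.toNNReal (r ^ n) • f r]
  refine setIntegral_congr_fun measurableSet_Ioi fun r hr ↦ ?_
  rw [NNReal.smul_def, Real.coe_toNNReal _ (pow_nonneg hr.out.le _)]

theorem integral_eq_integral_Ioi_integral_toSphere {f : V → F} (hf : Integrable f μ) :
    ∫ x, f x ∂μ = ∫ r in Ioi (0 : ℝ), r ^ (Module.finrank ℝ V - 1) •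
      ∫ θ : sphere (0 : V) 1, f (r • (θ : V)) ∂μ.toSphere := by
  let φ := homeomorphUnitSphereProd V
  let g : sphere (0 : V) 1 × Ioi (0 : ℝ) → F := fun p ↦ f ((p.2 : ℝ) • (p.1 : V))
  have hφ := μ.measurePreserving_homeomorphUnitSphereProd
  have hφ_emb : MeasurableEmbedding φ := φ.measurableEmbedding
  have hgφ : g ∘ φ = f ∘ (↑) := by
    funext x
    have hx : ‖(x : V)‖ ≠ 0 := norm_ne_zero_iff.2 x.2
    simp [g, φ, smul_smul, hx]
  have hg : Integrable g (μ.toSphere.prod (.volumeIoiPow (Module.finrank ℝ V - 1))) := by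
    rw [← hφ.integrable_comp_emb hφ_emb, hgφ]
    exact (integrableOn_iff_comap_subtypeVal (measurableSet_singleton (0 : V)).compl).1
      hf.integrableOn
  calc ∫ x, f x ∂μ = ∫ x : ({0}ᶜ : Set V), f x ∂(μ.comap (↑)) := by
        rw [integral_subtype_comap (measurableSet_singleton _).compl f, restrict_compl_singleton]
    _ = ∫ p, g p ∂(μ.toSphere.prod (.volumeIoiPow (Module.finrank ℝ V - 1))) := by
        rw [← hφ.integral_comp hφ_emb]
        exact congrArg (integral _) hgφ.symm
    _ = ∫ r : Ioi (0 : ℝ), ∫ θ, g (θ, r) ∂μ.toSphere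
          ∂(.volumeIoiPow (Module.finrank ℝ V - 1)) := integral_prod_symm _ hg
    _ = _ := integral_volumeIoiPow _ fun r ↦ ∫ θ : sphere (0 : V) 1, f (r • (θ : V)) ∂μ.toSphere

theorem integral_norm_mul_eq_integral_Ioi {k : ℝ → ℝ} {f : V → ℝ}
    (hkf : Integrable (fun x ↦ k ‖x‖ * f x) μ) :
    ∫ x, k ‖x‖ * f x ∂μ = ∫ r in Ioi (0 : ℝ), k r * r ^ (Module.finrank ℝ V - 1) *
      ∫ θ : sphere (0 : V) 1, f (r • (θ : V)) ∂μ.toSphere := by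
  rw [integral_eq_integral_Ioi_integral_toSphere μ hkf]
  refine setIntegral_congr_fun measurableSet_Ioi fun r hr ↦ ?_
  simp only [norm_smul, norm_eq_of_mem_sphere, mul_one, Real.norm_of_nonneg hr.out.le,
    integral_const_mul, smul_eq_mul]
  ring

lemma integral_Ioi_pow_mul_exp_neg_sq (m : ℕ) :
    ∫ t in Ioi (0 : ℝ), t ^ m * Real.exp (-t ^ 2) = Real.Gamma ((m + 1) / 2) / 2 := by
  have h := integral_rpow_mul_exp_neg_rpow (p := 2) (q := m) two_pos
    (neg_one_lt_zero.trans_le m.cast_nonneg)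
  simpa [div_eq_inv_mul] using h

theorem integral_exp_neg_norm_sq_mul_of_homogeneous {m : ℕ} {f : V → ℝ}
    (hfm : ∀ r > 0, ∀ x, f (r • x) = r ^ m * f x)
    (hf : Integrable (fun x ↦ Real.exp (-‖x‖ ^ 2) * f x) μ) :
    ∫ x, Real.exp (-‖x‖ ^ 2) * f x ∂μ =
      Real.Gamma ((m + Module.finrank ℝ V) / 2) / 2 *
        ∫ θ : sphere (0 : V) 1, f θ ∂μ.toSphere := by
  set n := Module.finrank ℝ V
  have hn_pos : 0 < n := Module.finrank_pos
  have hradial : ∀ r ∈ Ioi (0 : ℝ),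
      Real.exp (-r ^ 2) * r ^ (n - 1) * ∫ θ : sphere (0 : V) 1, f (r • (θ : V)) ∂μ.toSphere =
        r ^ (m + n - 1) * Real.exp (-r ^ 2) * ∫ θ : sphere (0 : V) 1, f θ ∂μ.toSphere := by
    intro r hr
    simp only [hfm r hr, integral_const_mul, Nat.add_sub_assoc hn_pos, pow_add]
    ring
  have hexponent : ((m + n - 1 : ℕ) : ℝ) + 1 = m + n := by
    rw [← Nat.cast_add_one, Nat.sub_add_cancel (by omega), Nat.cast_add]
  rw [integral_norm_mul_eq_integral_Ioi μ (k := fun r ↦ Real.exp (-r ^ 2)) hf,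
    setIntegral_congr_fun measurableSet_Ioi hradial, integral_mul_const,
    integral_Ioi_pow_mul_exp_neg_sq, hexponent]

end Polar

section SphericalMoments

variable {V ι : Type*} [NormedAddCommGroup V] [InnerProductSpace ℝ V] [Fintype ι]

lemma exists_orthonormalBasis_apply_eq [FiniteDimensional ℝ V] {e : V} (he : ‖e‖ = 1) :
    ∃ (u : Finset V) (b : OrthonormalBasis u ℝ V) (i : u), b i = e := by
  have he_ortho : Orthonormal ℝ ((↑) : ({e} : Set V) → V) :=
    ⟨fun v ↦ by rw [v.2, he], Subsingleton.pairwise⟩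
  obtain ⟨u, b, heu, hb⟩ := he_ortho.exists_orthonormalBasis_extension
  exact ⟨u, b, ⟨e, heu rfl⟩, by rw [hb]⟩

lemma exp_neg_norm_sq_mul_comp_inner_eq_prod [DecidableEq ι] (b : OrthonormalBasis ι ℝ V) (i : ι)
    (f : ℝ → ℝ) (x : V) :
    Real.exp (-‖x‖ ^ 2) * f ⟪b i, x⟫ =
      ∏ j, Real.exp (-⟪b j, x⟫ ^ 2) * if j = i then f ⟪b j, x⟫ else 1 := by
  rw [Finset.prod_mul_distrib, ← Real.exp_sum, Finset.sum_neg_distrib,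
    Finset.prod_ite_eq' Finset.univ i fun j ↦ f ⟪b j, x⟫, if_pos (Finset.mem_univ i),
    b.sum_sq_inner_right]

variable [MeasurableSpace V] [BorelSpace V]

lemma measurableEmbedding_inner_orthonormalBasis (b : OrthonormalBasis ι ℝ V) :
    MeasurableEmbedding fun x i ↦ ⟪b i, x⟫ := by
  simp only [← b.repr_apply_apply]
  exact (b.measurableEquiv.trans (MeasurableEquiv.toLp 2 (ι → ℝ)).symm).measurableEmbedding

variable [FiniteDimensional ℝ V]

lemma measurePreserving_inner_orthonormalBasis (b : OrthonormalBasis ι ℝ V) :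
    MeasurePreserving fun x i ↦ ⟪b i, x⟫ := by
  simp only [← b.repr_apply_apply]
  exact (PiLp.volume_preserving_ofLp ι).comp b.measurePreserving_repr

lemma integrable_prod_inner_orthonormalBasis (b : OrthonormalBasis ι ℝ V) {g : ι → ℝ → ℝ}
    (hg : ∀ i, Integrable (g i)) : Integrable fun x ↦ ∏ i, g i ⟪b i, x⟫ :=
  (measurePreserving_inner_orthonormalBasis b).integrable_comp_of_integrable
    (Integrable.fintype_prod hg)

lemma integral_prod_inner_orthonormalBasis (b : OrthonormalBasis ι ℝ V) (g : ι → ℝ → ℝ) :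
    ∫ x, ∏ i, g i ⟪b i, x⟫ = ∏ i, ∫ t, g i t := by
  rw [← integral_fintype_prod_volume_eq_prod]
  exact (measurePreserving_inner_orthonormalBasis b).integral_comp
    (measurableEmbedding_inner_orthonormalBasis b) fun y : ι → ℝ ↦ ∏ i, g i (y i)

theorem integrable_exp_neg_norm_sq_mul_comp_inner {e : V} (he : ‖e‖ = 1) {f : ℝ → ℝ}
    (hf : Integrable fun t ↦ Real.exp (-t ^ 2) * f t) :
    Integrable fun x : V ↦ Real.exp (-‖x‖ ^ 2) * f ⟪e, x⟫ := by
  classical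
  obtain ⟨u, b, i, rfl⟩ := exists_orthonormalBasis_apply_eq he
  simp only [exp_neg_norm_sq_mul_comp_inner_eq_prod b i]
  refine integrable_prod_inner_orthonormalBasis b
    (g := fun j t ↦ Real.exp (-t ^ 2) * if j = i then f t else 1) fun j ↦ ?_
  rcases eq_or_ne j i with rfl | hji
  · simpa using hf
  · simpa [hji] using integrable_exp_neg_mul_sq one_pos

theorem integral_exp_neg_norm_sq_mul_comp_inner {e : V} (he : ‖e‖ = 1) (f : ℝ → ℝ) :
    ∫ x : V, Real.exp (-‖x‖ ^ 2) * f ⟪e, x⟫ =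
      (∫ t, Real.exp (-t ^ 2) * f t) * √Real.pi ^ (Module.finrank ℝ V - 1) := by
  classical
  obtain ⟨u, b, i, rfl⟩ := exists_orthonormalBasis_apply_eq he
  have hfactor : ∀ j ∈ Finset.univ.erase i,
      ∫ t, Real.exp (-t ^ 2) * (if j = i then f t else 1) = √Real.pi := fun j hj ↦ by
    simpa [Finset.ne_of_mem_erase hj] using integral_gaussian 1
  simp only [exp_neg_norm_sq_mul_comp_inner_eq_prod b i]
  rw [integral_prod_inner_orthonormalBasis b
      fun j t ↦ Real.exp (-t ^ 2) * if j = i then f t else 1,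
    ← Finset.mul_prod_erase Finset.univ _ (Finset.mem_univ i), Finset.prod_congr rfl hfactor,
    Finset.prod_const, Finset.card_erase_of_mem (Finset.mem_univ i), Finset.card_univ,
    ← Module.finrank_eq_card_basis b.toBasis]
  simp only [if_true]

lemma integrable_exp_neg_sq_mul_pow (m : ℕ) :
    Integrable fun t : ℝ ↦ Real.exp (-t ^ 2) * t ^ m := by
  have h := integrable_rpow_mul_exp_neg_mul_sq one_pos (s := m)
    (neg_one_lt_zero.trans_le m.cast_nonneg)
  simpa [mul_comm] using h

lemma integral_exp_neg_sq_mul_pow_two_mul (k : ℕ) :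
    ∫ t : ℝ, Real.exp (-t ^ 2) * t ^ (2 * k) = Real.Gamma (k + 1 / 2) := by
  have hhalf : ∫ t in Ioi (0 : ℝ), Real.exp (-t ^ 2) * t ^ (2 * k) =
      Real.Gamma (k + 1 / 2) / 2 := by
    simp only [mul_comm (Real.exp _)]
    rw [integral_Ioi_pow_mul_exp_neg_sq]
    push_cast
    ring_nf
  have heven := integral_comp_abs (f := fun t : ℝ ↦ Real.exp (-t ^ 2) * t ^ (2 * k))
  simp only [sq_abs, (even_two_mul k).pow_abs] at heven
  rw [heven, hhalf]
  ring

theorem integral_toSphere_inner_pow {e : V} (he : ‖e‖ = 1) (k : ℕ) :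
    ∫ θ : sphere (0 : V) 1, ⟪e, θ⟫ ^ (2 * k) ∂(volume : Measure V).toSphere =
      2 * Real.Gamma (k + 1 / 2) * √Real.pi ^ (Module.finrank ℝ V - 1) /
        Real.Gamma (k + Module.finrank ℝ V / 2) := by
  have : Nontrivial V := nontrivial_of_ne e 0 (norm_ne_zero_iff.1 (by simp [he]))
  have hn : (0 : ℝ) < Module.finrank ℝ V := Nat.cast_pos.2 Module.finrank_pos
  have hΓ : 0 < Real.Gamma (k + Module.finrank ℝ V / 2) := Real.Gamma_pos_of_pos (by positivity)
  have hpolar := integral_exp_neg_norm_sq_mul_of_homogeneous volume (m := 2 * k)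
    (f := fun x ↦ ⟪e, x⟫ ^ (2 * k)) (fun r _ x ↦ by rw [real_inner_smul_right, mul_pow])
    (integrable_exp_neg_norm_sq_mul_comp_inner he (integrable_exp_neg_sq_mul_pow (2 * k)))
  rw [integral_exp_neg_norm_sq_mul_comp_inner he fun t ↦ t ^ (2 * k),
    integral_exp_neg_sq_mul_pow_two_mul, Nat.cast_mul, Nat.cast_two, add_div,
    mul_div_cancel_left₀ _ two_ne_zero] at hpolar
  rw [eq_div_iff hΓ.ne']
  linear_combination (-2) * hpolar

end SphericalMoments

section BesselKernel

lemma hasSum_integral_cos {α : Type*} [MeasurableSpace α] {μ : Measure α} [IsFiniteMeasure μ]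
    {g : α → ℝ} {C : ℝ} (hg : AEStronglyMeasurable g μ) (hgC : ∀ᵐ x ∂μ, |g x| ≤ C) :
    HasSum (fun k : ℕ ↦ (-1) ^ k / (2 * k).factorial * ∫ x, g x ^ (2 * k) ∂μ)
      (∫ x, Real.cos (g x) ∂μ) := by
  have hsummable : Summable fun k : ℕ ↦ C ^ (2 * k) / (2 * k).factorial :=
    (Real.summable_pow_div_factorial C).comp_injective (mul_right_injective₀ two_ne_zero)
  have h := hasSum_integral_of_dominated_convergence
    (F := fun (k : ℕ) x ↦ (-1) ^ k / (2 * k).factorial * g x ^ (2 * k))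
    (fun k _ ↦ C ^ (2 * k) / (2 * k).factorial) (fun k ↦ (hg.pow _).const_mul _)
    (fun k ↦ hgC.mono fun x hx ↦ ?_) (ae_of_all _ fun _ ↦ hsummable) (integrable_const _)
    (ae_of_all _ fun x ↦ by simpa only [div_mul_eq_mul_div] using Real.hasSum_cos (g x))
  · simpa only [integral_const_mul] using h
  · rw [norm_mul, norm_div, norm_pow, norm_neg, norm_one, one_pow, norm_pow, Real.norm_eq_abs,
      Real.norm_eq_abs, Nat.abs_cast, one_div_mul_eq_div]
    gcongr

lemma Gamma_natCast_add_half_eq_factorial (k : ℕ) :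
    Real.Gamma (k + 1 / 2) = (2 * k).factorial * √Real.pi / (4 ^ k * k.factorial) := by
  have h := Real.Gamma_mul_Gamma_add_half (k + 1 / 2)
  rw [add_assoc, add_halves, Real.Gamma_nat_eq_factorial,
    show 2 * ((k : ℝ) + 1 / 2) = (2 * k : ℕ) + 1 by push_cast; ring,
    Real.Gamma_nat_eq_factorial, sub_add_cancel_right, Real.rpow_neg two_pos.le,
    Real.rpow_natCast, pow_mul, show (2 : ℝ) ^ 2 = 4 by norm_num] at h
  rw [← div_div, eq_div_iff (by positivity), h]
  ring

lemma besselJ_of_pos (ν : ℝ) {z : ℝ} (hz : 0 < z) :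
    besselJ ν z = (z / 2) ^ ν *
      ∑' k : ℕ, (-1) ^ k * (z / 2) ^ (2 * k) / (k.factorial * Real.Gamma (ν + k + 1)) := by
  rw [besselJ, ← tsum_mul_left]
  refine tsum_congr fun k ↦ ?_
  rw [Real.rpow_add (half_pos hz)]
  norm_cast
  ring

variable {V : Type*} [NormedAddCommGroup V] [InnerProductSpace ℝ V] [FiniteDimensional ℝ V]
  [MeasurableSpace V] [BorelSpace V]

lemma integral_toSphere_cos_mul_inner {e : V} (he : ‖e‖ = 1) (t : ℝ) :
    ∫ θ : sphere (0 : V) 1, Real.cos (t * ⟪e, θ⟫) ∂(volume : Measure V).toSphere =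
      2 * Real.pi ^ (Module.finrank ℝ V / 2 : ℝ) *
        ∑' k : ℕ, (-1) ^ k * (t / 2) ^ (2 * k) /
          (k.factorial * Real.Gamma (k + Module.finrank ℝ V / 2)) := by
  have : Nontrivial V := nontrivial_of_ne e 0 (norm_ne_zero_iff.1 (by simp [he]))
  have hbound (θ : sphere (0 : V) 1) : |t * ⟪e, θ⟫| ≤ |t| := by
    rw [abs_mul]
    refine mul_le_of_le_one_right (abs_nonneg t) ((abs_real_inner_le_norm e θ).trans_eq ?_)
    rw [he, norm_eq_of_mem_sphere, one_mul]
  have hpi : √Real.pi * √Real.pi ^ (Module.finrank ℝ V - 1) =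
      Real.pi ^ (Module.finrank ℝ V / 2 : ℝ) := by
    rw [mul_pow_sub_one Module.finrank_pos.ne', Real.sqrt_eq_rpow,
      ← Real.rpow_mul_natCast pi_pos.le, one_div_mul_eq_div]
  rw [← (hasSum_integral_cos (Continuous.aestronglyMeasurable (by fun_prop))
    (ae_of_all _ hbound)).tsum_eq, ← tsum_mul_left]
  refine tsum_congr fun k ↦ ?_
  simp only [mul_pow]
  rw [integral_const_mul, integral_toSphere_inner_pow he, Gamma_natCast_add_half_eq_factorial,
    ← hpi, div_pow, pow_mul 2, show (2 : ℝ) ^ 2 = 4 by norm_num]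
  field_simp

theorem integral_toSphere_cos_inner {x : V} (hx : x ≠ 0) :
    ∫ θ : sphere (0 : V) 1, Real.cos ⟪x, θ⟫ ∂(volume : Measure V).toSphere =
      (2 * Real.pi) ^ (Module.finrank ℝ V / 2 : ℝ) * ‖x‖ ^ (1 - Module.finrank ℝ V / 2 : ℝ) *
        besselJ (Module.finrank ℝ V / 2 - 1) ‖x‖ := by
  have hx_pos : 0 < ‖x‖ := norm_pos_iff.2 hx
  have hunit : ‖‖x‖⁻¹ • x‖ = 1 := norm_smul_inv_norm (𝕜 := ℝ) hx
  have hinner (θ : V) : ⟪x, θ⟫ = ‖x‖ * ⟪‖x‖⁻¹ • x, θ⟫ := by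
    rw [real_inner_smul_left, mul_inv_cancel_left₀ hx_pos.ne']
  have hpow (n : ℝ) : (2 * Real.pi) ^ (n / 2) * ‖x‖ ^ (1 - n / 2) * (‖x‖ / 2) ^ (n / 2 - 1) =
      2 * Real.pi ^ (n / 2) := by
    rw [Real.mul_rpow two_pos.le pi_pos.le, Real.div_rpow hx_pos.le two_pos.le,
      ← neg_sub (n / 2), Real.rpow_neg hx_pos.le, Real.rpow_sub_one two_ne_zero]
    field_simp
  simp only [hinner]
  rw [integral_toSphere_cos_mul_inner hunit, besselJ_of_pos _ hx_pos, ← mul_assoc, hpow]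
  refine congrArg _ (tsum_congr fun k ↦ ?_)
  rw [sub_add_eq_add_sub, sub_add_cancel, add_comm (k : ℝ)]

end BesselKernel

section Plancherel

variable {V F : Type*} [NormedAddCommGroup V] [InnerProductSpace ℝ V] [FiniteDimensional ℝ V]
  [MeasurableSpace V] [BorelSpace V] [NormedAddCommGroup F] [NormedSpace ℂ F]

lemma continuous_fourier_of_integrable {f : V → F} (hf : Integrable f) : Continuous (𝓕 f) :=
  VectorFourier.fourierIntegral_continuous Real.continuous_fourierChar
    (L := innerₗ V) continuous_inner hf

lemma fourier_comp_sub_right (f : V → F) (x ξ : V) :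
    𝓕 (fun y ↦ f (y - x)) ξ = Real.fourierChar (-⟪x, ξ⟫) • 𝓕 f ξ := by
  have h := congrFun (VectorFourier.fourierIntegral_comp_add_right Real.fourierChar volume
    (innerₗ V) f (-x)) ξ
  simp only [map_neg, LinearMap.neg_apply, innerₗ_apply_apply, ← sub_eq_add_neg] at h
  exact h

variable {H : Type*} [NormedAddCommGroup H] [InnerProductSpace ℂ H] [CompleteSpace H]

theorem coeFn_fourier_toLp {f : V → H} (hf : Integrable f) (hf2 : MemLp f 2) :
    (𝓕 (hf2.toLp f) : Lp H 2 (volume : Measure V)) =ᵐ[volume] 𝓕 f := by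
  refine ae_eq_of_integral_contDiff_smul_eq ((Lp.memLp _).locallyIntegrable one_le_two)
    (continuous_fourier_of_integrable hf).locallyIntegrable fun g hg hg_supp ↦ ?_
  let G : SchwartzMap V ℂ := (hg_supp.comp_left Complex.ofReal_zero).toSchwartzMap
    (Complex.ofRealCLM.contDiff.comp hg)
  have hpairing := congrArg (· G) (Lp.fourier_toTemperedDistribution_eq (hf2.toLp f))
  simp only [TemperedDistribution.fourier_apply, Lp.toTemperedDistribution_apply] at hpairing
  calc ∫ x, g x • (𝓕 (hf2.toLp f) : Lp H 2 (volume : Measure V)) x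
      = ∫ x, G x • (𝓕 (hf2.toLp f) : Lp H 2 (volume : Measure V)) x :=
        integral_congr_ae (ae_of_all _ fun x ↦ (Complex.coe_smul _ _).symm)
    _ = ∫ x, 𝓕 (G : V → ℂ) x • f x := by
        rw [← hpairing]
        refine integral_congr_ae (hf2.coeFn_toLp.mono fun x hx ↦ ?_)
        simp only [hx, SchwartzMap.fourier_coe]
    _ = ∫ x, G x • 𝓕 f x := by
        have h := VectorFourier.integral_fourierIntegral_smul_eq_flip (μ := volume)
          (ν := volume) (L := innerₗ V) Real.continuous_fourierChar continuous_inner G.integrable hf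
        rwa [flip_innerₗ] at h
    _ = ∫ x, g x • 𝓕 f x := integral_congr_ae (ae_of_all _ fun x ↦ Complex.coe_smul _ _)

lemma memLp_two_fourier {f : V → H} (hf : Integrable f) (hf2 : MemLp f 2) : MemLp (𝓕 f) 2 :=
  (memLp_congr_ae (coeFn_fourier_toLp hf hf2)).1 (Lp.memLp _)

theorem integral_inner_fourier_fourier {f g : V → H} (hf : Integrable f) (hf2 : MemLp f 2)
    (hg : Integrable g) (hg2 : MemLp g 2) :
    ∫ ξ, inner ℂ (𝓕 f ξ) (𝓕 g ξ) = ∫ x, inner ℂ (f x) (g x) := by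
  have h := Lp.inner_fourier_eq (hf2.toLp f) (hg2.toLp g)
  rw [L2.inner_def, L2.inner_def] at h
  calc ∫ ξ, inner ℂ (𝓕 f ξ) (𝓕 g ξ)
      = ∫ ξ, inner ℂ ((𝓕 (hf2.toLp f) : Lp H 2 (volume : Measure V)) ξ)
          ((𝓕 (hg2.toLp g) : Lp H 2 (volume : Measure V)) ξ) :=
        integral_congr_ae
          ((coeFn_fourier_toLp hf hf2).symm.comp₂ (inner ℂ) (coeFn_fourier_toLp hg hg2).symm)
    _ = ∫ x, inner ℂ (hf2.toLp f x) (hg2.toLp g x) := h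
    _ = ∫ x, inner ℂ (f x) (g x) :=
        integral_congr_ae (hf2.coeFn_toLp.comp₂ (inner ℂ) hg2.coeFn_toLp)

theorem integral_inner_comp_sub_eq_fourier_norm_sq {f : V → H} (hf : Integrable f)
    (hf2 : MemLp f 2) (x : V) :
    ∫ y, inner ℂ (f y) (f (y - x)) = 𝓕 (fun ξ ↦ ((‖𝓕 f ξ‖ ^ 2 : ℝ) : ℂ)) x := by
  rw [← integral_inner_fourier_fourier hf hf2 (hf.comp_sub_right x)
    (hf2.comp_measurePreserving (measurePreserving_sub_right volume x)), Real.fourier_eq]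
  refine integral_congr_ae (ae_of_all _ fun ξ ↦ ?_)
  simp only [fourier_comp_sub_right, Circle.smul_def, inner_smul_right, smul_eq_mul,
    inner_self_eq_norm_sq_to_K, Complex.coe_algebraMap, Complex.ofReal_pow, real_inner_comm]

end Plancherel

section Covariogram

lemma re_fourier_ofReal {V : Type*} [NormedAddCommGroup V] [InnerProductSpace ℝ V]
    [FiniteDimensional ℝ V] [MeasurableSpace V] [BorelSpace V] {f : V → ℝ} (hf : Integrable f)
    (x : V) :
    (𝓕 (fun ξ ↦ (f ξ : ℂ)) x).re = ∫ ξ, Real.cos (2 * Real.pi * ⟪x, ξ⟫) * f ξ := by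
  have hf' : Integrable fun ξ ↦ (f ξ : ℂ) := hf.ofReal
  rw [Real.fourier_eq]
  refine (integral_re ((Real.fourierIntegral_convergent_iff x).2 hf')).symm.trans
    (integral_congr_ae (ae_of_all _ fun ξ ↦ ?_))
  simp only [Circle.smul_def, Real.fourierChar_apply, smul_eq_mul, RCLike.re_to_complex,
    Complex.re_mul_ofReal, Complex.exp_ofReal_mul_I_re, mul_neg, Real.cos_neg, real_inner_comm]

variable {d : ℕ} {D : Set (E d)}

lemma memLp_indC (hD : NullMeasurableSet D) (hD_fin : volume D ≠ ∞) (p : ℝ≥0∞) :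
    MemLp (indC D) p := by
  have h : MemLp (indC (toMeasurable volume D)) p :=
    memLp_indicator_const p (measurableSet_toMeasurable _ _) 1
      (Or.inr (by rwa [measure_toMeasurable]))
  exact (memLp_congr_ae (indicator_ae_eq_of_ae_eq_set hD.toMeasurable_ae_eq)).1 h

lemma integral_inner_indC_comp_sub (D : Set (E d)) (x : E d) :
    ∫ y, inner ℂ (indC D y) (indC D (y - x)) = covariogram D x := by
  rw [covariogram, ← integral_complex_ofReal]
  refine integral_congr_ae (ae_of_all _ fun y ↦ ?_)
  simp only [indC, indicator]
  split_ifs <;> simp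

theorem integrable_norm_fourier_indC_sq (hD : NullMeasurableSet D) (hD_fin : volume D ≠ ∞) :
    Integrable fun ξ ↦ ‖𝓕 (indC D) ξ‖ ^ 2 :=
  (memLp_two_fourier (memLp_one_iff_integrable.1 (memLp_indC hD hD_fin 1))
    (memLp_indC hD hD_fin 2)).integrable_norm_pow two_ne_zero

theorem covariogram_eq_integral_cos (hD : NullMeasurableSet D) (hD_fin : volume D ≠ ∞)
    (x : E d) :
    covariogram D x = ∫ ξ, Real.cos (2 * Real.pi * ⟪x, ξ⟫) * ‖𝓕 (indC D) ξ‖ ^ 2 := by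
  rw [← re_fourier_ofReal (integrable_norm_fourier_indC_sq hD hD_fin),
    ← integral_inner_comp_sub_eq_fourier_norm_sq
      (memLp_one_iff_integrable.1 (memLp_indC hD hD_fin 1)) (memLp_indC hD hD_fin 2),
    integral_inner_indC_comp_sub, Complex.ofReal_re]

end Covariogram

section SphericalMean

/-- The Fourier transform of the surface measure of the unit sphere of `ℝⁿ`, at a point of norm
`t > 0`. It is the kernel through which spherical averaging acts on Fourier integrals. Since
`0 ^ (1 - n / 2)` has a junk value, `t = 0` need not give the area of the sphere. -/
def sphereFourier (n : ℕ) (t : ℝ) : ℝ :=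
  2 * Real.pi * t ^ (1 - n / 2 : ℝ) * besselJ (n / 2 - 1) (2 * Real.pi * t)

variable {V : Type*} [NormedAddCommGroup V] [InnerProductSpace ℝ V] [FiniteDimensional ℝ V]
  [MeasurableSpace V] [BorelSpace V]

theorem integral_toSphere_cos_eq_sphereFourier {h : ℝ} (hh : 0 < h) {ξ : V} (hξ : ξ ≠ 0) :
    ∫ θ : sphere (0 : V) 1, Real.cos (2 * Real.pi * ⟪h • (θ : V), ξ⟫)
      ∂(volume : Measure V).toSphere = sphereFourier (Module.finrank ℝ V) (h * ‖ξ‖) := by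
  have hscale (θ : V) : 2 * Real.pi * ⟪h • θ, ξ⟫ = ⟪(2 * Real.pi * h) • ξ, θ⟫ := by
    rw [real_inner_smul_left, real_inner_smul_left, real_inner_comm, ← mul_assoc]
  have hnorm : ‖(2 * Real.pi * h) • ξ‖ = 2 * Real.pi * (h * ‖ξ‖) := by
    rw [norm_smul, Real.norm_of_nonneg (by positivity), mul_assoc]
  simp only [hscale]
  rw [integral_toSphere_cos_inner (smul_ne_zero (by positivity) hξ), hnorm, sphereFourier,
    Real.mul_rpow two_pi_pos.le (by positivity), ← mul_assoc, ← Real.rpow_add two_pi_pos,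
    add_sub_cancel, Real.rpow_one]

lemma integral_cos_mul_ae_eq_sphereFourier_mul [Nontrivial V] {h : ℝ} (hh : 0 < h) (f : V → ℝ) :
    (fun ξ ↦ ∫ θ : sphere (0 : V) 1, Real.cos (2 * Real.pi * ⟪h • (θ : V), ξ⟫) * f ξ
      ∂(volume : Measure V).toSphere) =ᵐ[volume]
      fun ξ ↦ sphereFourier (Module.finrank ℝ V) (h * ‖ξ‖) * f ξ := by
  filter_upwards [Measure.ae_ne volume 0] with ξ hξ
  rw [integral_mul_const, integral_toSphere_cos_eq_sphereFourier hh hξ]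

variable {f : V → ℝ}

lemma integrable_cos_mul_toSphere_prod (hf : Integrable f) (h : ℝ) :
    Integrable (fun p : sphere (0 : V) 1 × V ↦
      Real.cos (2 * Real.pi * ⟪h • (p.1 : V), p.2⟫) * f p.2)
      ((volume : Measure V).toSphere.prod volume) :=
  (hf.comp_snd _).bdd_mul (c := 1) (Continuous.aestronglyMeasurable (by fun_prop))
    (ae_of_all _ fun _ ↦ Real.abs_cos_le_one _)

variable [Nontrivial V] {h : ℝ}

lemma integrable_sphereFourier_mul (hf : Integrable f) (hh : 0 < h) :
    Integrable fun ξ ↦ sphereFourier (Module.finrank ℝ V) (h * ‖ξ‖) * f ξ :=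
  (integrable_cos_mul_toSphere_prod hf h).integral_prod_right.congr
    (integral_cos_mul_ae_eq_sphereFourier_mul hh f)

theorem integral_toSphere_integral_cos_mul (hf : Integrable f) (hh : 0 < h) :
    ∫ θ : sphere (0 : V) 1, (∫ ξ, Real.cos (2 * Real.pi * ⟪h • (θ : V), ξ⟫) * f ξ)
      ∂(volume : Measure V).toSphere =
    ∫ ξ, sphereFourier (Module.finrank ℝ V) (h * ‖ξ‖) * f ξ := by
  rw [integral_integral_swap (integrable_cos_mul_toSphere_prod hf h)]
  exact integral_congr_ae (integral_cos_mul_ae_eq_sphereFourier_mul hh f)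

theorem integral_Ioi_sub_sphereFourier_mul_average (hf : Integrable f) (hh : 0 < h) :
    ∫ ρ in Ioi (0 : ℝ), ((volume : Measure V).toSphere.real univ -
        sphereFourier (Module.finrank ℝ V) (h * ρ)) * ρ ^ (Module.finrank ℝ V - 1) *
        ⨍ θ : sphere (0 : V) 1, f (ρ • (θ : V)) ∂(volume : Measure V).toSphere =
      (∫ ξ, f ξ) - ⨍ θ : sphere (0 : V) 1, (∫ ξ, Real.cos (2 * Real.pi * ⟪h • (θ : V), ξ⟫) * f ξ)
        ∂(volume : Measure V).toSphere := by
  have : NeZero (volume : Measure V).toSphere := ⟨(volume : Measure V).toSphere_ne_zero⟩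
  have hω : (volume : Measure V).toSphere.real univ ≠ 0 := measureReal_univ_pos.ne'
  simp only [average_eq, smul_eq_mul, mul_left_comm _ (_⁻¹ : ℝ)]
  set ω := (volume : Measure V).toSphere.real univ
  have hfω := hf.const_mul ω
  have hfJ := integrable_sphereFourier_mul hf hh
  have hpolar := integral_norm_mul_eq_integral_Ioi volume
    (k := fun r ↦ ω - sphereFourier (Module.finrank ℝ V) (h * r)) (f := f)
    (by simpa only [sub_mul, Pi.sub_def] using hfω.sub hfJ)
  rw [integral_const_mul, ← hpolar, integral_toSphere_integral_cos_mul hf hh]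
  simp only [sub_mul]
  rw [integral_sub hfω hfJ, integral_const_mul, mul_sub, inv_mul_cancel_left₀ hω]

end SphericalMean

section Hankel

lemma toSphere_real_univ_eq_mul_unitBallVol (V : Type*) [NormedAddCommGroup V]
    [InnerProductSpace ℝ V] [FiniteDimensional ℝ V] [MeasurableSpace V] [BorelSpace V]
    [Nontrivial V] :
    (volume : Measure V).toSphere.real univ =
      Module.finrank ℝ V * unitBallVol (Module.finrank ℝ V) := by
  rw [Measure.toSphere_real_apply_univ, measureReal_def, InnerProductSpace.volume_ball,
    ENNReal.ofReal_one, one_pow, one_mul, ENNReal.toReal_ofReal (by positivity), unitBallVol,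
    Real.sqrt_eq_rpow, ← Real.rpow_mul_natCast pi_pos.le, one_div_mul_eq_div]

lemma isoCov_zero {d : ℕ} [Nontrivial (E d)] (D : Set (E d)) : isoCov D 0 = covariogram D 0 := by
  have : NeZero (volume : Measure (E d)).toSphere := ⟨(volume : Measure (E d)).toSphere_ne_zero⟩
  simp only [isoCov, zero_smul]
  exact average_const (volume : Measure (E d)).toSphere (covariogram D 0)

theorem hankel_isoCov_identity_general (d : ℕ) (hd : 1 ≤ d) (D : Set (E d))
    (hD : NullMeasurableSet D) (hD_fin : volume D ≠ ∞) (h : ℝ) (hh : 0 < h) :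
    ∫ ρ in Set.Ioi (0 : ℝ),
        ((d : ℝ) * unitBallVol d -
            2 * Real.pi * (h * ρ) ^ (1 - (d : ℝ) / 2) *
              besselJ ((d : ℝ) / 2 - 1) (2 * Real.pi * h * ρ)) *
          ρ ^ ((d : ℝ) - 1) * avgFT D ρ =
      isoCov D 0 - isoCov D h := by
  have : NeZero d := ⟨Nat.one_le_iff_ne_zero.1 hd⟩
  have hankel := integral_Ioi_sub_sphereFourier_mul_average
    (integrable_norm_fourier_indC_sq hD hD_fin) hh
  simp only [← covariogram_eq_integral_cos hD hD_fin, toSphere_real_univ_eq_mul_unitBallVol,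
    finrank_euclideanSpace_fin] at hankel
  have hcov_zero : covariogram D 0 = ∫ ξ, ‖𝓕 (indC D) ξ‖ ^ 2 := by
    simp [covariogram_eq_integral_cos hD hD_fin]
  have hpow (ρ : ℝ) : ρ ^ ((d : ℝ) - 1) = ρ ^ (d - 1) := by
    rw [← Real.rpow_natCast, Nat.cast_pred hd]
  simp only [mul_assoc _ h, hpow]
  rw [isoCov_zero, hcov_zero]
  exact hankel

end Hankel

/-- the Hankel-type identity
`∫₀^∞ (dκ_d − 2π(hρ)^{1−d/2} J_{d/2−1}(2πhρ)) ρ^{d−1} γ̄̂_D(ρ) dρ = γ̄_D(0) − γ̄_D(h)`. -/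
theorem hankel_isoCov_identity (d : ℕ) (hd : 1 ≤ d) (D : Set (E d))
    (hDmeas : MeasurableSet D) (hDbdd : Bornology.IsBounded D) (h : ℝ) (hh : 0 < h) :
    ∫ ρ in Set.Ioi (0 : ℝ),
        ((d : ℝ) * unitBallVol d -
            2 * Real.pi * (h * ρ) ^ (1 - (d : ℝ) / 2) *
              besselJ ((d : ℝ) / 2 - 1) (2 * Real.pi * h * ρ)) *
          ρ ^ ((d : ℝ) - 1) * avgFT D ρ =
      isoCov D 0 - isoCov D h :=
  hankel_isoCov_identity_general d hd D hDmeas.nullMeasurableSet hDbdd.measure_lt_top.ne h hh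

end
end
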